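/- arXiv:1703.09531 — 3 statements merged into one kernel-verified Lean document; each statement's English description precedes it below -/
import Mathlib

section
/- Let f₀ ∈ F_{α,β} for some α > 0, β ∈ ℝ. For every n ≥ n₀, where n₀ is an integer depending only on α and β, there exists a log-concave density f̄ₙ supported on [−(8/(5α)) log n, (8/(5α)) log n] that is piecewise log-linear with O(n^{1/5} log n) knots (the implied constant depending only on α, β) and satisfies h²(f₀, f̄ₙ) ≤ C(α,β) (log n)² n^{−4/5} for a constant C(α,β) depending only on α and β. Moreover, the knots may be taken to be c n^{−6/5} log n-separated for some universal constant c > 0. -/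
open MeasureTheory Real Set

/-- A probability density on ℝ: measurable, nonnegative, integrating to one. -/
def IsDensityFn (f : ℝ → ℝ) : Prop :=
  Measurable f ∧ (∀ x, 0 ≤ f x) ∧ ∫ x, f x = 1

/-- Log-concavity of a nonnegative function (multiplicative form, allowing zeros). -/
def IsLogConcaveFn (f : ℝ → ℝ) : Prop :=
  ∀ x y t : ℝ, 0 ≤ t → t ≤ 1 →
    f x ^ t * f y ^ (1 - t) ≤ f (t * x + (1 - t) * y)

/-- Membership in `F_{α,β}`: an upper semi-continuous log-concave probability density
with the envelope bound `f x ≤ e^{β − α|x|}`. -/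
def MemF (α β : ℝ) (f : ℝ → ℝ) : Prop :=
  IsDensityFn f ∧ UpperSemicontinuous f ∧ IsLogConcaveFn f ∧
    ∀ x : ℝ, f x ≤ Real.exp (β - α * |x|)

/-- The squared Hellinger distance between two densities on ℝ. -/
noncomputable def hellingerSq (p q : ℝ → ℝ) : ℝ :=
  ∫ x, (Real.sqrt (p x) - Real.sqrt (q x)) ^ 2


/-! ### Lipschitz regularization of a log-concave function -/

lemma usc_mul_cont {f e : ℝ → ℝ} (hf : UpperSemicontinuous f)
    (he : Continuous e) (hpos : ∀ x, 0 < e x) : UpperSemicontinuous (fun x => f x * e x) := by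
  intro x c hc
  have h1 : f x < c / e x := by
    rw [lt_div_iff₀ (hpos x)]; exact hc
  obtain ⟨c1, h2, h3⟩ := exists_between h1
  have h4 : c1 * e x < c := by rwa [lt_div_iff₀ (hpos x)] at h3
  have h5 : ∀ᶠ x' in nhds x, c1 * e x' < c :=
    ((continuous_const.mul he).tendsto x).eventually_lt_const h4
  filter_upwards [hf x c1 h2, h5] with x' ha hb
  exact lt_of_le_of_lt (mul_le_mul_of_nonneg_right ha.le (hpos x').le) hb

lemma logconcave_tilt {f : ℝ → ℝ} (hnn : ∀ x, 0 ≤ f x) (hlc : IsLogConcaveFn f) (k : ℝ) :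
    IsLogConcaveFn (fun x => f x * exp (k * x)) := by
  intro x y t ht0 ht1
  have h := hlc x y t ht0 ht1
  simp only
  rw [mul_rpow (hnn x) (exp_pos _).le, mul_rpow (hnn y) (exp_pos _).le, ← exp_mul, ← exp_mul]
  have e1 : exp (k * (t * x + (1 - t) * y)) = exp (k * x * t) * exp (k * y * (1 - t)) := by
    rw [← exp_add]; ring_nf
  rw [e1]
  calc _ = (f x ^ t * f y ^ (1 - t)) * (exp (k * x * t) * exp (k * y * (1 - t))) := by ring
    _ ≤ _ := mul_le_mul_of_nonneg_right h (by positivity)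

lemma logconcave_quasi {G : ℝ → ℝ} (hnn : ∀ x, 0 ≤ G x) (hlc : IsLogConcaveFn G)
    {q y t : ℝ} (ht0 : 0 ≤ t) (ht1 : t ≤ 1) (h : G y ≤ G q) :
    G y ≤ G (t * q + (1 - t) * y) := by
  rcases (hnn y).eq_or_lt with h0 | h0
  · rw [← h0]; exact hnn _
  refine le_trans ?_ (hlc q y t ht0 ht1)
  calc G y = G y ^ t * G y ^ (1 - t) := by
        rw [← rpow_add h0]; simp
    _ ≤ _ := by
        gcongr

lemma logconcave_quasi_right {G : ℝ → ℝ} (hnn : ∀ x, 0 ≤ G x) (hlc : IsLogConcaveFn G)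
    {q x y : ℝ} (h1 : q < x) (h2 : x ≤ y) (h : G y ≤ G q) : G y ≤ G x := by
  have hqy : 0 < y - q := by linarith
  have := logconcave_quasi hnn hlc (t := (y - x) / (y - q)) (div_nonneg (by linarith) hqy.le)
    ((div_le_one hqy).2 (by linarith)) h
  convert this using 2
  field_simp
  ring

lemma logconcave_quasi_left {G : ℝ → ℝ} (hnn : ∀ x, 0 ≤ G x) (hlc : IsLogConcaveFn G)
    {q x y : ℝ} (h1 : x < q) (h2 : y ≤ x) (h : G y ≤ G q) : G y ≤ G x := by
  have hqy : 0 < q - y := by linarith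
  have := logconcave_quasi hnn hlc (t := (x - y) / (q - y)) (div_nonneg (by linarith) hqy.le)
    ((div_le_one hqy).2 (by linarith)) h
  convert this using 2
  field_simp
  ring

lemma lipschitz_regularization (f : ℝ → ℝ) (hnn : ∀ x, 0 ≤ f x) (husc : UpperSemicontinuous f)
    (hlc : IsLogConcaveFn f) {A L K : ℝ} (hA : ∀ x, f x ≤ A) (hK : 0 ≤ K)
    (x0 : ℝ) (hx0 : x0 ∈ Icc (-L) L) (hfx0 : 0 < f x0) :
    ∃ w : ℝ → ℝ, ConcaveOn ℝ univ w ∧ (∀ x y, w x - w y ≤ K * |x - y|) ∧ (∀ x, exp (w x) ≤ A) ∧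
      ∃ q r : ℝ, ∀ x ∈ Icc (-L) L, f x ≤ exp (w x) ∧
        exp (w x) ≤ f x + A * exp (-K * |x - q|) + A * exp (-K * |x - r|) := by
  have hne : (Icc (-L) L).Nonempty := ⟨x0, hx0⟩
  have hA0 : 0 < A := hfx0.trans_le (hA x0)
  have hmax : ∀ x, ∃ y ∈ Icc (-L) L, ∀ y' ∈ Icc (-L) L,
      f y' * exp (-K * |x - y'|) ≤ f y * exp (-K * |x - y|) := by
    intro x
    have := UpperSemicontinuousOn.exists_isMaxOn hne isCompact_Icc
      ((usc_mul_cont husc (e := fun y => exp (-K * |x - y|)) (by fun_prop)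
        (fun _ => exp_pos _)).upperSemicontinuousOn _)
    obtain ⟨y, hy, hm⟩ := this
    exact ⟨y, hy, fun y' hy' => hm hy'⟩
  choose Y hY hYmax using hmax
  set F : ℝ → ℝ := fun x => f (Y x) * exp (-K * |x - Y x|) with hF
  have hFle : ∀ x, ∀ y ∈ Icc (-L) L, f y * exp (-K * |x - y|) ≤ F x := fun x y hy => hYmax x y hy
  have hFpos : ∀ x, 0 < F x := fun x =>
    lt_of_lt_of_le (mul_pos hfx0 (exp_pos _)) (hFle x x0 hx0)
  have hfY : ∀ x, 0 < f (Y x) := by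
    intro x
    have := hFpos x
    exact pos_of_mul_pos_left this (exp_pos _).le
  refine ⟨fun x => Real.log (F x), ?_, ?_, ?_, ?_⟩
  · refine ⟨convex_univ, ?_⟩
    intro x _ y _ a b ha hb hab
    simp only [smul_eq_mul]
    obtain rfl : b = 1 - a := by linarith
    have hle := hlc (Y x) (Y y) a ha (by linarith)
    have hmem : a * Y x + (1 - a) * Y y ∈ Icc (-L) L := by
      have h1 := hY x
      have h2 := hY y
      constructor <;> nlinarith [h1.1, h1.2, h2.1, h2.2]
    have h2 := hFle (a * x + (1 - a) * y) _ hmem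
    have hpos' : 0 < f (Y x) ^ a * f (Y y) ^ (1 - a) :=
      mul_pos (rpow_pos_of_pos (hfY x) _) (rpow_pos_of_pos (hfY y) _)
    have h3 := Real.log_le_log (mul_pos (hpos'.trans_le hle) (exp_pos _)) h2
    have h4 := Real.log_le_log hpos' hle
    rw [Real.log_mul (rpow_pos_of_pos (hfY x) _).ne' (rpow_pos_of_pos (hfY y) _).ne',
      Real.log_rpow (hfY x), Real.log_rpow (hfY y)] at h4
    rw [Real.log_mul (hpos'.trans_le hle).ne' (exp_pos _).ne', Real.log_exp] at h3
    simp only [hF]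
    rw [Real.log_mul (hfY x).ne' (exp_pos _).ne', Real.log_mul (hfY y).ne' (exp_pos _).ne',
      Real.log_exp, Real.log_exp]
    refine le_trans ?_ h3
    have h5 : |a * x + (1 - a) * y - (a * Y x + (1 - a) * Y y)|
        ≤ a * |x - Y x| + (1 - a) * |y - Y y| := by
      calc _ = |a * (x - Y x) + (1 - a) * (y - Y y)| := by ring_nf
        _ ≤ |a * (x - Y x)| + |(1 - a) * (y - Y y)| := abs_add_le _ _
        _ = _ := by rw [abs_mul, abs_mul, abs_of_nonneg ha, abs_of_nonneg hb]
    nlinarith [mul_le_mul_of_nonneg_left h5 hK]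
  · intro x y
    have h1 := hFle y (Y x) (hY x)
    have h2 := Real.log_le_log (mul_pos (hfY x) (exp_pos _)) h1
    rw [Real.log_mul (hfY x).ne' (exp_pos _).ne', Real.log_exp] at h2
    simp only
    have h3 : Real.log (F x) = Real.log (f (Y x)) + -K * |x - Y x| := by
      simp only [hF]
      rw [Real.log_mul (hfY x).ne' (exp_pos _).ne', Real.log_exp]
    have h5 : |y - Y x| ≤ |x - y| + |x - Y x| := by
      rw [abs_sub_comm x y]; exact abs_sub_le _ _ _
    nlinarith [mul_le_mul_of_nonneg_left h5 hK]
  · intro x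
    simp only
    rw [Real.exp_log (hFpos x)]
    calc F x ≤ A * 1 := by
          refine mul_le_mul (hA _) ?_ (exp_pos _).le hA0.le
          rw [exp_le_one_iff]
          nlinarith [mul_nonneg hK (abs_nonneg (x - Y x))]
      _ = A := mul_one A
  · obtain ⟨q, hq, hqm⟩ := UpperSemicontinuousOn.exists_isMaxOn hne isCompact_Icc
      ((usc_mul_cont husc (e := fun y => exp (-K * y)) (by fun_prop)
        (fun _ => exp_pos _)).upperSemicontinuousOn _)
    obtain ⟨r, hr, hrm⟩ := UpperSemicontinuousOn.exists_isMaxOn hne isCompact_Icc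
      ((usc_mul_cont husc (e := fun y => exp (K * y)) (by fun_prop)
        (fun _ => exp_pos _)).upperSemicontinuousOn _)
    refine ⟨q, r, fun x hx => ?_⟩
    rw [Real.exp_log (hFpos x)]
    have hb1 : 0 ≤ A * exp (-K * |x - q|) := by positivity
    have hb2 : 0 ≤ A * exp (-K * |x - r|) := by positivity
    refine ⟨by simpa using hFle x x hx, ?_⟩
    rcases le_total x (Y x) with hxy | hxy
    · have e1 : F x = (f (Y x) * exp (-K * Y x)) * exp (K * x) := by
        simp only [hF]
        rw [mul_assoc, ← exp_add, abs_of_nonpos (by linarith)]; ring_nf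
      have hm : f (Y x) * exp (-K * Y x) ≤ f q * exp (-K * q) := hqm (hY x)
      rcases le_or_gt x q with h | h
      · have : F x ≤ A * exp (-K * |x - q|) := by
          rw [e1, abs_of_nonpos (by linarith)]
          calc _ ≤ (f q * exp (-K * q)) * exp (K * x) :=
                mul_le_mul_of_nonneg_right hm (exp_pos _).le
            _ = f q * exp (-K * -(x - q)) := by rw [mul_assoc, ← exp_add]; ring_nf
            _ ≤ _ := mul_le_mul_of_nonneg_right (hA q) (exp_pos _).le
        linarith [hnn x]
      · have h3 := logconcave_quasi_right (G := fun x => f x * exp (-K * x))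
          (fun x => mul_nonneg (hnn x) (exp_pos _).le)
          (logconcave_tilt hnn hlc (-K)) h hxy hm
        have : F x ≤ f x := by
          rw [e1]
          calc _ ≤ (f x * exp (-K * x)) * exp (K * x) :=
                mul_le_mul_of_nonneg_right h3 (exp_pos _).le
            _ = f x := by rw [mul_assoc, ← exp_add]; simp
        linarith
    · have e1 : F x = (f (Y x) * exp (K * Y x)) * exp (-K * x) := by
        simp only [hF]
        rw [mul_assoc, ← exp_add, abs_of_nonneg (by linarith)]; ring_nf
      have hm : f (Y x) * exp (K * Y x) ≤ f r * exp (K * r) := hrm (hY x)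
      rcases le_or_gt r x with h | h
      · have : F x ≤ A * exp (-K * |x - r|) := by
          rw [e1, abs_of_nonneg (by linarith)]
          calc _ ≤ (f r * exp (K * r)) * exp (-K * x) :=
                mul_le_mul_of_nonneg_right hm (exp_pos _).le
            _ = f r * exp (-K * (x - r)) := by rw [mul_assoc, ← exp_add]; ring_nf
            _ ≤ _ := mul_le_mul_of_nonneg_right (hA r) (exp_pos _).le
        linarith [hnn x]
      · have h3 := logconcave_quasi_left (G := fun x => f x * exp (K * x))
          (fun x => mul_nonneg (hnn x) (exp_pos _).le)
          (logconcave_tilt hnn hlc K) h hxy hm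
        have : F x ≤ f x := by
          rw [e1]
          calc _ ≤ (f x * exp (K * x)) * exp (-K * x) :=
                mul_le_mul_of_nonneg_right h3 (exp_pos _).le
            _ = f x := by rw [mul_assoc, ← exp_add]; simp
        linarith

/-! ### Piecewise linear interpolation of a concave function -/

lemma interp_exists (u : ℝ → ℝ) (hu : ConcaveOn ℝ univ u) (T : Finset ℝ) :
    ∀ E : ℝ, 0 < E → (∀ z ∈ T, 0 < z ∧ z < E) →
    ∃ (a b : ℝ) (c : ℝ → ℝ), (∀ z, 0 ≤ c z) ∧
      (∃ p, (p = 0 ∨ p ∈ T) ∧ p < E ∧ b = (u E - u p) / (E - p)) ∧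
      (a + b * E + ∑ z ∈ T, c z * min z E = u E) ∧
      ∀ y ∈ Icc 0 E, ∃ p q, (p = 0 ∨ p ∈ T) ∧ (q = E ∨ q ∈ T) ∧ p < q ∧ p ≤ y ∧ y ≤ q ∧
        (∀ z ∈ T, z ≤ p ∨ q ≤ z) ∧
        a + b * y + ∑ z ∈ T, c z * min z y = u p + (u q - u p) / (q - p) * (y - p) := by
  induction T using Finset.induction_on_max with
  | empty =>
    intro E hE _
    refine ⟨u 0, (u E - u 0) / (E - 0), fun _ => 0, fun _ => le_rfl, ⟨0, Or.inl rfl, hE, rfl⟩,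
      ?_, ?_⟩
    · simp; field_simp; ring
    · intro y hy
      refine ⟨0, E, Or.inl rfl, Or.inl rfl, hE, hy.1, hy.2, by simp, ?_⟩
      simp
  | insert m T hm ih =>
    intro E hE hT
    have hmE := hT m (Finset.mem_insert_self _ _)
    obtain ⟨a, b, c, hc, ⟨p0, hp0, hp0m, hb⟩, hend, hall⟩ := ih m hmE.1
      (fun z hz => ⟨(hT z (Finset.mem_insert_of_mem hz)).1, hm z hz⟩)
    have hmT : m ∉ T := fun h => lt_irrefl _ (hm m h)
    set b' := (u E - u m) / (E - m) with hb'
    have hbb : b' ≤ b := by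
      rw [hb, hb']
      exact hu.slope_anti_adjacent (mem_univ _) (mem_univ _) hp0m hmE.2
    have hsum : ∀ y, ∑ z ∈ insert m T, (if z = m then b - b' else c z) * min z y =
        (b - b') * min m y + ∑ z ∈ T, c z * min z y := by
      intro y
      rw [Finset.sum_insert hmT, if_pos rfl]
      congr 1
      refine Finset.sum_congr rfl fun z hz => ?_
      rw [if_neg (hm z hz).ne]
    have hgt : ∀ y, m ≤ y → ∑ z ∈ T, c z * min z y = ∑ z ∈ T, c z * min z m := by
      intro y hy
      refine Finset.sum_congr rfl fun z hz => ?_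
      rw [min_eq_left ((hm z hz).le.trans hy), min_eq_left (hm z hz).le]
    have hright : ∀ y, m ≤ y → a + b' * y + ((b - b') * min m y + ∑ z ∈ T, c z * min z y)
        = u m + b' * (y - m) := by
      intro y hy
      rw [hgt y hy, min_eq_left hy, ← hend]; ring
    refine ⟨a, b', fun z => if z = m then b - b' else c z, ?_, ?_, ?_, ?_⟩
    · intro z
      simp only
      split_ifs
      · linarith
      · exact hc z
    · exact ⟨m, Or.inr (Finset.mem_insert_self _ _), hmE.2, rfl⟩
    · rw [hsum, hright E hmE.2.le, hb']
      have : E - m ≠ 0 := by linarith [hmE.2]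
      field_simp; ring
    · intro y hy
      rw [hsum]
      rcases le_total y m with h | h
      · obtain ⟨p, q, hp, hq, hpq, h1, h2, h3, h4⟩ := hall y ⟨hy.1, h⟩
        have hqm : q ≤ m := by
          rcases hq with rfl | hq
          · exact le_rfl
          · exact (hm q hq).le
        refine ⟨p, q, hp.imp id Finset.mem_insert_of_mem, ?_, hpq, h1, h2, ?_, ?_⟩
        · right
          rcases hq with rfl | hq
          · exact Finset.mem_insert_self _ _
          · exact Finset.mem_insert_of_mem hq
        · intro z hz
          rcases Finset.mem_insert.1 hz with rfl | hz
          · exact Or.inr hqm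
          · exact h3 z hz
        · rw [← h4, min_eq_right h]; ring
      · refine ⟨m, E, Or.inr (Finset.mem_insert_self _ _), Or.inl rfl, hmE.2, h, hy.2, ?_, ?_⟩
        · intro z hz
          rcases Finset.mem_insert.1 hz with rfl | hz
          · exact Or.inl le_rfl
          · exact Or.inl (hm z hz).le
        · rw [hright y h]

/-! ### Selecting knots on a lattice -/

lemma card_jumps (Λ : ℕ → ℤ) (hΛ : Monotone Λ) (m : ℕ) :
    (((Finset.Ico 1 (m + 1)).filter (fun j => Λ (j - 1) ≠ Λ j)).card : ℤ) ≤ Λ m - Λ 0 := by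
  induction m with
  | zero => simp
  | succ m ih =>
    have h1 : Finset.Ico 1 (m + 1 + 1) = insert (m + 1) (Finset.Ico 1 (m + 1)) := by
      ext x; simp only [Finset.mem_Ico, Finset.mem_insert]; omega
    rw [h1, Finset.filter_insert]
    have hmono := hΛ (Nat.le_succ m)
    simp only [Nat.succ_eq_add_one] at hmono
    split_ifs with h
    · simp only [Nat.add_sub_cancel] at h
      rw [Finset.card_insert_of_notMem (by simp)]
      push_cast
      omega
    · omega

lemma const_of_no_jump (Λ : ℕ → ℤ) (M a b : ℕ) (hb : b ≤ M)
    (h : ∀ j ∈ (Finset.Ico 1 M).filter (fun j => Λ (j - 1) ≠ Λ j), j ≤ a ∨ b ≤ j) :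
    ∀ k, a ≤ k → k < b → Λ k = Λ a := by
  intro k hk
  induction k, hk using Nat.le_induction with
  | base => intro _; rfl
  | succ k hk ih =>
    intro hkb
    rw [← ih (by omega)]
    by_contra hne
    have := h (k + 1) (by
      simp only [Finset.mem_filter, Finset.mem_Ico, Nat.add_sub_cancel]
      exact ⟨⟨by omega, by omega⟩, fun h => hne h.symm⟩)
    omega

lemma clipped_variation (U : ℕ → ℝ) (hU : ∀ i j, i ≤ j → U (j + 1) - U j ≤ U (i + 1) - U i)
    {B τ : ℝ} (hB : ∀ i, U i ≤ B) (hτ : τ ≤ B) (m : ℕ) :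
    ∑ k ∈ Finset.range m, |max (U (k + 1)) τ - max (U k) τ| ≤ 2 * (B - τ) := by
  have hgB : ∀ i, max (U i) τ ≤ B := fun i => max_le (hB i) hτ
  have hgτ : ∀ i, τ ≤ max (U i) τ := fun i => le_max_right _ _
  suffices h : ∑ k ∈ Finset.range m, |max (U (k + 1)) τ - max (U k) τ| ≤
      (B - max (U 0) τ) + (B - max (U m) τ) by
    linarith [hgτ 0, hgτ m]
  induction m with
  | zero => simp; exact ⟨hB 0, hτ⟩
  | succ m ih =>
    rcases le_total (U (m + 1)) (U m) with h | h
    · rw [Finset.sum_range_succ]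
      have : max (U (m + 1)) τ ≤ max (U m) τ := max_le_max_right _ h
      rw [abs_of_nonpos (by linarith)]
      linarith
    · have : ∑ k ∈ Finset.range (m + 1), |max (U (k + 1)) τ - max (U k) τ| =
          ∑ k ∈ Finset.range (m + 1), (max (U (k + 1)) τ - max (U k) τ) := by
        refine Finset.sum_congr rfl fun k hk => abs_of_nonneg ?_
        have hk' : k ≤ m := by simpa [Nat.lt_succ_iff] using hk
        have h2 := hU k m hk'
        have : max (U k) τ ≤ max (U (k + 1)) τ := max_le_max_right _ (by linarith)
        linarith
      rw [this, Finset.sum_range_sub (fun k => max (U k) τ)]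
      linarith [hgB (m + 1)]

/-- Decreasing logarithmic scale for slopes. -/
noncomputable def slopeScale (s : ℝ) : ℝ := Real.log (1 + max (-s) 0) - Real.log (1 + max s 0)

lemma slopeScale_anti : Antitone slopeScale := by
  intro s t h
  unfold slopeScale
  have h1 : Real.log (1 + max (-t) 0) ≤ Real.log (1 + max (-s) 0) := by
    apply Real.log_le_log (by positivity)
    gcongr
  have h2 : Real.log (1 + max s 0) ≤ Real.log (1 + max t 0) := by
    apply Real.log_le_log (by positivity)
    gcongr
  linarith

lemma slopeScale_pos {s : ℝ} (hs : 0 < s) : slopeScale s = -Real.log (1 + s) := by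
  unfold slopeScale
  rw [max_eq_right (by linarith), max_eq_left hs.le]; simp

lemma slopeScale_nonpos {s : ℝ} (hs : s ≤ 0) : slopeScale s = Real.log (1 - s) := by
  unfold slopeScale
  rw [max_eq_left (by linarith), max_eq_right hs]; simp [sub_eq_add_neg]

lemma slopeScale_abs {s K : ℝ} (hs : |s| ≤ K) : |slopeScale s| ≤ Real.log (1 + K) := by
  have hs' := abs_le.1 hs
  rcases le_or_gt s 0 with h | h
  · rw [slopeScale_nonpos h, abs_of_nonneg (Real.log_nonneg (by linarith))]
    exact Real.log_le_log (by linarith) (by linarith)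
  · rw [slopeScale_pos h, abs_neg, abs_of_nonneg (Real.log_nonneg (by linarith))]
    exact Real.log_le_log (by linarith) (by linarith)

lemma floor_eq_sub_lt {x y : ℝ} (h : ⌊x⌋ = ⌊y⌋) : x - y < 1 := by
  have h1 := Int.lt_floor_add_one x
  have h2 := Int.floor_le y
  rw [h] at h1
  linarith

lemma slope_sign {s t η : ℝ} (hη : 0 < η) (h : ⌊slopeScale s / η⌋ = ⌊slopeScale t / η⌋)
    (hs : s ≤ 0) : t ≤ 0 := by
  by_contra ht
  push Not at ht
  have h1 : slopeScale t / η < 0 := by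
    rw [slopeScale_pos ht]
    apply div_neg_of_neg_of_pos _ hη
    have := Real.log_pos (show 1 < 1 + t by linarith)
    linarith
  have h2 : 0 ≤ slopeScale s / η := by
    rw [slopeScale_nonpos hs]
    exact div_nonneg (Real.log_nonneg (by linarith)) hη.le
  have h3 : (0:ℤ) ≤ ⌊slopeScale s / η⌋ := Int.floor_nonneg.2 h2
  rw [h] at h3
  exact absurd (Int.floor_nonneg.1 h3) (not_le.2 h1)

lemma log_ratio_bound {a b η : ℝ} (ha : 0 < a) (hb : 0 < b) (hη : 0 < η) (hη1 : η ≤ 1)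
    (h : Real.log a - Real.log b ≤ η) : a - b ≤ 2 * η * b := by
  have h1 : Real.log (a / b) ≤ η := by rw [Real.log_div ha.ne' hb.ne']; exact h
  have h2 : a / b ≤ exp η := by
    rw [← Real.log_le_iff_le_exp (by positivity)]; exact h1
  have h3 : exp η ≤ 1 + 2 * η := by
    have := Real.abs_exp_sub_one_le (x := η) (by rw [abs_of_pos hη]; exact hη1)
    rw [abs_of_pos hη] at this
    linarith [(abs_le.1 this).2]
  have h4 : a ≤ (1 + 2 * η) * b := by
    rw [div_le_iff₀ hb] at h2
    exact h2.trans (mul_le_mul_of_nonneg_right h3 hb.le)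
  linarith

lemma slope_close_pos {s t η : ℝ} (hη : 0 < η) (hη1 : η ≤ 1)
    (h : ⌊slopeScale s / η⌋ = ⌊slopeScale t / η⌋) (hs : 0 < s) (ht : 0 < t) :
    t - s ≤ 2 * η * (1 + s) := by
  have h1 := floor_eq_sub_lt h
  rw [slopeScale_pos hs, slopeScale_pos ht, ← sub_div, div_lt_one hη] at h1
  have := log_ratio_bound (a := 1 + t) (b := 1 + s) (by linarith) (by linarith) hη hη1 (by linarith)
  linarith

lemma slope_close_neg {s t η : ℝ} (hη : 0 < η) (hη1 : η ≤ 1)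
    (h : ⌊slopeScale s / η⌋ = ⌊slopeScale t / η⌋) (hs : s ≤ 0) (ht : t ≤ 0) :
    t - s ≤ 2 * η * (1 - t) := by
  have h1 := floor_eq_sub_lt h
  rw [slopeScale_nonpos hs, slopeScale_nonpos ht, ← sub_div, div_lt_one hη] at h1
  have := log_ratio_bound (a := 1 - s) (b := 1 - t) (by linarith) (by linarith) hη hη1 (by linarith)
  linarith

/-- Cumulative variation used for choosing knots. -/
noncomputable def cumVar (U : ℕ → ℝ) (τ d : ℝ) (j : ℕ) : ℝ :=
  ∑ k ∈ Finset.range j, (d + |max (U (k + 1)) τ - max (U k) τ|)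

lemma cumVar_mono (U : ℕ → ℝ) (τ : ℝ) {d : ℝ} (hd : 0 ≤ d) : Monotone (cumVar U τ d) := by
  refine monotone_nat_of_le_succ fun n => ?_
  unfold cumVar
  rw [Finset.sum_range_succ]
  have := abs_nonneg (max (U (n + 1)) τ - max (U n) τ)
  linarith

lemma cumVar_sub (U : ℕ → ℝ) (τ d : ℝ) {i j : ℕ} (h : i ≤ j) :
    cumVar U τ d j - cumVar U τ d i =
      ∑ k ∈ Finset.Ico i j, (d + |max (U (k + 1)) τ - max (U k) τ|) := by
  unfold cumVar
  rw [Finset.sum_Ico_eq_sub _ h]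

lemma group_estimate (U : ℕ → ℝ) {K d η ρ τ : ℝ} (hd : 0 < d)
    (hη : 0 < η) (hη1 : η ≤ 1) (hρ : 0 < ρ)
    (hU : ∀ i j, i ≤ j → U (j + 1) - U j ≤ U (i + 1) - U i)
    (hlip : ∀ i, |U (i + 1) - U i| ≤ K * d)
    (a b i : ℕ) (hai : a ≤ i) (hib : i ≤ b) (hab : a < b) (hUi : τ ≤ U i)
    (h1 : ∀ k, a ≤ k → k < b → ⌊cumVar U τ d k / ρ⌋ = ⌊cumVar U τ d a / ρ⌋)
    (h2 : ∀ k, a ≤ k → k < b →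
      ⌊slopeScale ((U (k + 1) - U k) / d) / η⌋ = ⌊slopeScale ((U (a + 1) - U a) / d) / η⌋) :
    U i - (U a + (U b - U a) / (b * d - a * d) * (i * d - a * d)) ≤ 2 * η * (ρ + (K + 1) * d) := by
  obtain ⟨b', rfl⟩ : ∃ b', b = b' + 1 := ⟨b - 1, by omega⟩
  have hV : cumVar U τ d (b' + 1) - cumVar U τ d a ≤ ρ + (K + 1) * d := by
    have e1 := floor_eq_sub_lt (h1 b' (by omega) (by omega))
    rw [← sub_div, div_lt_one hρ] at e1
    have e2 : cumVar U τ d (b' + 1) = cumVar U τ d b' +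
        (d + |max (U (b' + 1)) τ - max (U b') τ|) := by
      unfold cumVar; rw [Finset.sum_range_succ]
    have e3 : |max (U (b' + 1)) τ - max (U b') τ| ≤ |U (b' + 1) - U b'| :=
      abs_max_sub_max_le_abs _ _ _
    linarith [hlip b']
  have hmono := cumVar_mono U τ hd.le
  set D : ℕ → ℝ := fun k => U (k + 1) - U k with hD
  have tel : ∀ m n : ℕ, m ≤ n → ∑ k ∈ Finset.Ico m n, D k = U n - U m := fun m n h =>
    Finset.sum_Ico_sub U h
  have hbad : (0:ℝ) < ((b' + 1 : ℕ) : ℝ) * d - a * d := by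
    have : (a:ℝ) < ((b' + 1 : ℕ) : ℝ) := by exact_mod_cast hab
    nlinarith
  set σ := (U (b' + 1) - U a) / (((b' + 1 : ℕ) : ℝ) * d - a * d) with hσ
  have hσ' : σ * (((b' + 1 : ℕ) : ℝ) * d - a * d) = U (b' + 1) - U a := by
    rw [hσ]; exact div_mul_cancel₀ _ hbad.ne'
  have hsum_ub : U (b' + 1) - U a ≤ (((b' + 1 : ℕ) : ℝ) - a) * D a := by
    rw [← tel a (b' + 1) hab.le]
    have := Finset.sum_le_card_nsmul (Finset.Ico a (b' + 1)) D (D a)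
      (fun k hk => hU a k (Finset.mem_Ico.1 hk).1)
    rw [nsmul_eq_mul, Nat.card_Ico, Nat.cast_sub hab.le] at this
    exact this
  have hsum_lb : (((b' + 1 : ℕ) : ℝ) - a) * D b' ≤ U (b' + 1) - U a := by
    rw [← tel a (b' + 1) hab.le]
    have := Finset.card_nsmul_le_sum (Finset.Ico a (b' + 1)) D (D b')
      (fun k hk => hU k b' (by have := (Finset.mem_Ico.1 hk).2; omega))
    rw [nsmul_eq_mul, Nat.card_Ico, Nat.cast_sub hab.le] at this
    exact this
  have hba : (0:ℝ) < ((b' + 1 : ℕ) : ℝ) - a := by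
    have : (a:ℝ) < ((b' + 1 : ℕ) : ℝ) := by exact_mod_cast hab
    linarith
  have hσub : σ * d ≤ D a := by
    have : (((b' + 1 : ℕ) : ℝ) - a) * (σ * d) ≤ (((b' + 1 : ℕ) : ℝ) - a) * D a := by
      calc _ = σ * (((b' + 1 : ℕ) : ℝ) * d - a * d) := by ring
        _ = _ := hσ'
        _ ≤ _ := hsum_ub
    exact le_of_mul_le_mul_left this hba
  have hσlb : D b' ≤ σ * d := by
    have : (((b' + 1 : ℕ) : ℝ) - a) * D b' ≤ (((b' + 1 : ℕ) : ℝ) - a) * (σ * d) := by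
      calc _ ≤ _ := hsum_lb
        _ = σ * (((b' + 1 : ℕ) : ℝ) * d - a * d) := hσ'.symm
        _ = _ := by ring
    exact le_of_mul_le_mul_left this hba
  rcases le_or_gt (D a / d) 0 with hsg | hsg
  · -- decreasing group
    have hneg : ∀ k, a ≤ k → k < b' + 1 → D k / d ≤ 0 := fun k h h' =>
      slope_sign hη (h2 k h h').symm hsg
    have hanti : ∀ k ≤ i, a ≤ k → U i ≤ U k := by
      intro k hk hak
      have := tel k i hk
      have h3 : ∑ k ∈ Finset.Ico k i, D k ≤ 0 := Finset.sum_nonpos fun j hj => by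
        have hj' := Finset.mem_Ico.1 hj
        have := hneg j (by omega) (by omega)
        by_contra hc
        push Not at hc
        exact absurd this (not_le.2 (div_pos hc hd))
      linarith
    have key : ∀ k ∈ Finset.Ico a i, D k - σ * d ≤
        2 * η * (d + |max (U (k + 1)) τ - max (U k) τ|) := by
      intro k hk
      have hk' := Finset.mem_Ico.1 hk
      have c1 := slope_close_neg hη hη1
        ((h2 b' (by omega) (by omega)).trans (h2 k (by omega) (by omega)).symm)
        (hneg b' (by omega) (by omega)) (hneg k (by omega) (by omega))
      have c2 := hanti k (by omega) (by omega)
      have c3 := hanti (k + 1) (by omega) (by omega)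
      rw [max_eq_left (by linarith), max_eq_left (by linarith)]
      have c4 : D k - D b' ≤ 2 * η * (d - D k) := by
        have := mul_le_mul_of_nonneg_left c1 hd.le
        calc _ = d * (D k / d - D b' / d) := by field_simp
          _ ≤ _ := this
          _ = _ := by simp only [hD]; field_simp
      have c5 : -D k ≤ |U (k + 1) - U k| := neg_le_abs _
      nlinarith
    have fin : U i - (U a + σ * (i * d - a * d)) = ∑ k ∈ Finset.Ico a i, (D k - σ * d) := by
      rw [Finset.sum_sub_distrib, tel a i hai]
      simp only [Finset.sum_const, Nat.card_Ico, nsmul_eq_mul, Nat.cast_sub hai]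
      ring
    rw [fin]
    calc _ ≤ ∑ k ∈ Finset.Ico a i, 2 * η * (d + |max (U (k + 1)) τ - max (U k) τ|) :=
          Finset.sum_le_sum key
      _ = 2 * η * (cumVar U τ d i - cumVar U τ d a) := by
          rw [← Finset.mul_sum, cumVar_sub U τ d hai]
      _ ≤ _ := by
          have := hmono hib
          gcongr
          linarith
  · -- increasing group
    have hpos : ∀ k, a ≤ k → k < b' + 1 → 0 < D k / d := fun k h h' => by
      by_contra hc
      push Not at hc
      exact absurd (slope_sign hη (h2 k h h') hc) (not_le.2 hsg)
    have hmonoU : ∀ k, i ≤ k → k ≤ b' + 1 → U i ≤ U k := by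
      intro k hk hak
      have := tel i k hk
      have h3 : 0 ≤ ∑ k ∈ Finset.Ico i k, D k := Finset.sum_nonneg fun j hj => by
        have hj' := Finset.mem_Ico.1 hj
        have := hpos j (by omega) (by omega)
        exact (pos_of_mul_pos_left (by rwa [div_eq_mul_inv] at this) (by positivity)).le
      linarith
    have key : ∀ k ∈ Finset.Ico i (b' + 1), σ * d - D k ≤
        2 * η * (d + |max (U (k + 1)) τ - max (U k) τ|) := by
      intro k hk
      have hk' := Finset.mem_Ico.1 hk
      have c1 := slope_close_pos hη hη1 (h2 k (by omega) (by omega))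
        (hpos k (by omega) (by omega)) hsg
      have c2 := hmonoU k (by omega) (by omega)
      have c3 := hmonoU (k + 1) (by omega) (by omega)
      rw [max_eq_left (by linarith), max_eq_left (by linarith)]
      have c4 : D a - D k ≤ 2 * η * (d + D k) := by
        have := mul_le_mul_of_nonneg_left c1 hd.le
        calc _ = d * (D a / d - D k / d) := by field_simp
          _ ≤ _ := this
          _ = _ := by simp only [hD]; field_simp
      have c5 : D k ≤ |U (k + 1) - U k| := le_abs_self _
      nlinarith
    have fin : U i - (U a + σ * (i * d - a * d)) =
        ∑ k ∈ Finset.Ico i (b' + 1), (σ * d - D k) := by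
      rw [Finset.sum_sub_distrib, tel i (b' + 1) hib]
      simp only [Finset.sum_const, Nat.card_Ico, nsmul_eq_mul, Nat.cast_sub hib]
      linear_combination -hσ'
    rw [fin]
    calc _ ≤ ∑ k ∈ Finset.Ico i (b' + 1), 2 * η * (d + |max (U (k + 1)) τ - max (U k) τ|) :=
          Finset.sum_le_sum key
      _ = 2 * η * (cumVar U τ d (b' + 1) - cumVar U τ d i) := by
          rw [← Finset.mul_sum, cumVar_sub U τ d hib]
      _ ≤ _ := by
          have := hmono hai
          gcongr
          linarith

lemma lattice_approx (u : ℝ → ℝ) (hu : ConcaveOn ℝ univ u) {K d η ρ τ B : ℝ}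
    (hlip : ∀ x y, u x - u y ≤ K * |x - y|) (hB : ∀ x, u x ≤ B) (hτ : τ ≤ B) (hd : 0 < d)
    (hη : 0 < η) (hη1 : η ≤ 1) (hρ : 0 < ρ) (M : ℕ) (hM : 0 < M) :
    ∃ (T : Finset ℝ) (a b : ℝ) (c : ℝ → ℝ),
      (∀ z ∈ T, ∃ j : ℕ, 1 ≤ j ∧ j < M ∧ z = j * d) ∧
      (T.card : ℝ) ≤ (M * d + 2 * (B - τ)) / ρ + 2 * Real.log (1 + K) / η + 1 ∧
      (∀ z, 0 ≤ c z) ∧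
      ∀ y ∈ Icc 0 (M * d), a + b * y + ∑ z ∈ T, c z * min z y ≤ u y ∧
        (τ + K * d ≤ u y → u y - (a + b * y + ∑ z ∈ T, c z * min z y) ≤
          2 * η * (ρ + (K + 1) * d) + K * d) := by
  set U : ℕ → ℝ := fun i => u (i * d) with hUdef
  have hU1 : ∀ j, U (j + 1 + 1) - U (j + 1) ≤ U (j + 1) - U j := by
    intro j
    have := hu.slope_anti_adjacent (x := (j:ℝ) * d) (y := ((j + 1 : ℕ) : ℝ) * d)
      (z := ((j + 1 + 1 : ℕ) : ℝ) * d) (mem_univ _) (mem_univ _)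
      (by push_cast; nlinarith) (by push_cast; nlinarith)
    rw [show ((j + 1 + 1 : ℕ) : ℝ) * d - ((j + 1 : ℕ) : ℝ) * d = d by push_cast; ring,
      show ((j + 1 : ℕ) : ℝ) * d - (j : ℝ) * d = d by push_cast; ring,
      div_le_div_iff_of_pos_right hd] at this
    exact this
  have hU : ∀ i j, i ≤ j → U (j + 1) - U j ≤ U (i + 1) - U i := by
    have : Antitone (fun j => U (j + 1) - U j) := antitone_nat_of_succ_le hU1
    exact fun i j h => this h
  have hUlip : ∀ i, |U (i + 1) - U i| ≤ K * d := by
    intro i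
    have h1 := hlip (((i + 1 : ℕ) : ℝ) * d) ((i : ℝ) * d)
    have h2 := hlip ((i : ℝ) * d) (((i + 1 : ℕ) : ℝ) * d)
    rw [show ((i + 1 : ℕ) : ℝ) * d - (i : ℝ) * d = d by push_cast; ring, abs_of_pos hd] at h1
    rw [show (i : ℝ) * d - ((i + 1 : ℕ) : ℝ) * d = -d by push_cast; ring, abs_neg,
      abs_of_pos hd] at h2
    rw [abs_le]
    constructor
    · simp only [hUdef]; linarith
    · exact h1
  set V := cumVar U τ d with hV
  set S : ℕ → ℝ := fun j => slopeScale ((U (j + 1) - U j) / d) with hS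
  have hVm : Monotone V := cumVar_mono U τ hd.le
  have hSm : Monotone S := fun i j h =>
    slopeScale_anti (by have := hU i j h; gcongr)
  set Λ₁ : ℕ → ℤ := fun j => ⌊V j / ρ⌋ with hΛ₁
  set Λ₂ : ℕ → ℤ := fun j => ⌊S j / η⌋ with hΛ₂
  have hm1 : Monotone Λ₁ := fun i j h => Int.floor_mono (by have := hVm h; gcongr)
  have hm2 : Monotone Λ₂ := fun i j h => Int.floor_mono (by have := hSm h; gcongr)
  set Λ : ℕ → ℤ := fun j => Λ₁ j + Λ₂ j with hΛ
  have hm : Monotone Λ := hm1.add hm2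
  set T₀ := (Finset.Ico 1 M).filter (fun j => Λ (j - 1) ≠ Λ j) with hT₀
  set T : Finset ℝ := T₀.image (fun j : ℕ => (j:ℝ) * d) with hT
  have hTmem : ∀ z ∈ T, ∃ j : ℕ, 1 ≤ j ∧ j < M ∧ z = j * d := by
    intro z hz
    obtain ⟨j, hj, rfl⟩ := Finset.mem_image.1 hz
    have := Finset.mem_Ico.1 (Finset.mem_filter.1 hj).1
    exact ⟨j, this.1, this.2, rfl⟩
  have hMd : 0 < (M:ℝ) * d := by positivity
  have hTbd : ∀ z ∈ T, 0 < z ∧ z < M * d := by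
    intro z hz
    obtain ⟨j, h1, h2, rfl⟩ := hTmem z hz
    have h1' : (1:ℝ) ≤ j := by exact_mod_cast h1
    have h2' : (j:ℝ) < M := by exact_mod_cast h2
    exact ⟨by positivity, by gcongr⟩
  obtain ⟨a, b, c, hc, -, -, hall⟩ := interp_exists u hu T (M * d) hMd hTbd
  refine ⟨T, a, b, c, hTmem, ?_, hc, ?_⟩
  · -- counting
    have h1 : (T.card : ℝ) ≤ T₀.card := by exact_mod_cast Finset.card_image_le
    obtain ⟨m, rfl⟩ : ∃ m, M = m + 1 := ⟨M - 1, by omega⟩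
    have h2 : (T₀.card : ℤ) ≤ Λ m - Λ 0 := card_jumps Λ hm m
    have h2' : (T₀.card : ℝ) ≤ (Λ₁ m : ℝ) + Λ₂ m - (Λ₁ 0 + Λ₂ 0) := by
      have : ((T₀.card : ℤ) : ℝ) ≤ ((Λ m - Λ 0 : ℤ) : ℝ) := by exact_mod_cast h2
      simp only [hΛ] at this
      push_cast at this
      exact this
    have h3 : (Λ₁ 0 : ℝ) = 0 := by
      simp [hΛ₁, hV, cumVar]
    have h4 : (Λ₁ m : ℝ) ≤ V m / ρ := Int.floor_le _
    have h5 : (Λ₂ m : ℝ) ≤ S m / η := Int.floor_le _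
    have h6 : S 0 / η - 1 < Λ₂ 0 := Int.sub_one_lt_floor _
    have hSabs : ∀ j, |S j| ≤ Real.log (1 + K) := fun j => by
      apply slopeScale_abs
      rw [abs_div, abs_of_pos hd, div_le_iff₀ hd]
      exact hUlip j
    have h7 : S m / η - S 0 / η ≤ 2 * Real.log (1 + K) / η := by
      rw [← sub_div]
      have i1 := (abs_le.1 (hSabs m)).2
      have i2 := (abs_le.1 (hSabs 0)).1
      gcongr
      linarith
    have h8 : V m / ρ ≤ (((m + 1 : ℕ) : ℝ) * d + 2 * (B - τ)) / ρ := by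
      have hv := clipped_variation U hU (fun i => hB _) hτ m
      have : V m = m * d + ∑ k ∈ Finset.range m, |max (U (k + 1)) τ - max (U k) τ| := by
        simp [hV, cumVar, Finset.sum_add_distrib]
      rw [this]
      push_cast
      gcongr
      nlinarith
    linarith
  · intro y hy
    obtain ⟨p, q, hp, hq, hpq, hpy, hyq, hgap, hv⟩ := hall y hy
    set σ := (u q - u p) / (q - p) with hσ
    have hqp : 0 < q - p := by linarith
    have hchord : ∀ y, p ≤ y → y ≤ q → u p + σ * (y - p) ≤ u y := by
      intro y h1 h2
      have := hu.2 (mem_univ p) (mem_univ q) 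
        (show 0 ≤ (q - y) / (q - p) from div_nonneg (by linarith) hqp.le)
        (show 0 ≤ (y - p) / (q - p) from div_nonneg (by linarith) hqp.le)
        (by field_simp; ring)
      simp only [smul_eq_mul] at this
      rw [show (q - y) / (q - p) * p + (y - p) / (q - p) * q = y by field_simp; ring] at this
      refine le_trans (le_of_eq ?_) this
      rw [hσ]; field_simp; ring
    rw [hv]
    refine ⟨hchord y hpy hyq, fun hgood => ?_⟩
    -- lattice indices
    obtain ⟨a', ha', ha'M⟩ : ∃ a' : ℕ, p = a' * d ∧ a' < M := by
      rcases hp with rfl | hp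
      · exact ⟨0, by simp, hM⟩
      · obtain ⟨j, _, h2, h3⟩ := hTmem p hp
        exact ⟨j, h3, h2⟩
    obtain ⟨b', hb', hb'M⟩ : ∃ b' : ℕ, q = b' * d ∧ b' ≤ M := by
      rcases hq with rfl | hq
      · exact ⟨M, rfl, le_rfl⟩
      · obtain ⟨j, _, h2, h3⟩ := hTmem q hq
        exact ⟨j, h3, h2.le⟩
    have hab : a' < b' := by
      rw [ha', hb'] at hpq
      exact_mod_cast lt_of_mul_lt_mul_right hpq hd.le
    have hΛc : ∀ k, a' ≤ k → k < b' → Λ k = Λ a' := by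
      refine const_of_no_jump Λ M a' b' hb'M fun j hj => ?_
      have := hgap (j * d) (Finset.mem_image.2 ⟨j, hj, rfl⟩)
      rw [ha', hb'] at this
      rcases this with h | h
      · left; exact_mod_cast le_of_mul_le_mul_right h hd
      · right; exact_mod_cast le_of_mul_le_mul_right h hd
    have hΛ12 : ∀ k, a' ≤ k → k < b' → Λ₁ k = Λ₁ a' ∧ Λ₂ k = Λ₂ a' := by
      intro k h1 h2
      have e := hΛc k h1 h2
      have e1 := hm1 h1
      have e2 := hm2 h1
      simp only [hΛ] at e
      omega
    have hlat : ∀ i : ℕ, a' ≤ i → i ≤ b' → τ ≤ U i →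
        u (i * d) - (u p + σ * (i * d - p)) ≤ 2 * η * (ρ + (K + 1) * d) := by
      intro i h1 h2 h3
      have := group_estimate U hd hη hη1 hρ hU hUlip a' b' i h1 h2 hab h3
        (fun k h h' => (hΛ12 k h h').1) (fun k h h' => (hΛ12 k h h').2)
      rw [hσ, ha', hb']
      exact this
    -- locate the cell
    obtain ⟨j, hj1, hj2, hj3, hj4⟩ : ∃ j : ℕ, a' ≤ j ∧ j < b' ∧ j * d ≤ y ∧ y ≤ (j + 1 : ℕ) * d := by
      have hex : ∃ j : ℕ, y ≤ (j + 1 : ℕ) * d ∧ a' ≤ j :=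
        ⟨b' - 1, by rw [Nat.sub_add_cancel (by omega)]; linarith, by omega⟩
      classical
      refine ⟨Nat.find hex, (Nat.find_spec hex).2, ?_, ?_, (Nat.find_spec hex).1⟩
      · have := Nat.find_min' hex (m := b' - 1)
          ⟨by rw [Nat.sub_add_cancel (by omega)]; linarith, by omega⟩
        omega
      · rcases (Nat.find_spec hex).2.eq_or_lt with h | h
        · rw [← h]; linarith
        · have hmin := Nat.find_min hex (m := Nat.find hex - 1) (by omega)
          by_contra hc
          push Not at hc
          apply hmin
          rw [Nat.sub_add_cancel (by omega)]
          exact ⟨hc.le, by omega⟩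
    have hcell : ∀ i : ℕ, (i = j ∨ i = j + 1) → σ * (i * d - p) ≤ σ * (y - p) →
        u y - (u p + σ * (y - p)) ≤ 2 * η * (ρ + (K + 1) * d) + K * d := by
      intro i hi hle
      have hdist : |y - i * d| ≤ d := by
        push_cast at hj4
        rw [abs_le]
        rcases hi with rfl | rfl
        · constructor <;> nlinarith
        · push_cast; constructor <;> nlinarith
      have hK0 : 0 ≤ K := by
        have := (abs_nonneg _).trans (hUlip 0)
        exact nonneg_of_mul_nonneg_left this hd
      have h1 := hlip y (i * d)
      have h2 : K * |y - i * d| ≤ K * d := by gcongr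
      have h3 := hlat i (by omega) (by omega) (by simp only [hUdef]; linarith)
      linarith
    rcases le_total 0 σ with hs | hs
    · exact hcell j (Or.inl rfl) (by gcongr)
    · refine hcell (j + 1) (Or.inr rfl) ?_
      exact mul_le_mul_of_nonpos_left (by linarith) hs

/-! ### Mixture representation, log-concavity and Hellinger estimates -/

lemma sum_orderEmb (T : Finset ℝ) (F : ℝ → ℝ) :
    ∑ i : Fin T.card, F (T.orderEmbOfFin rfl i) = ∑ z ∈ T, F z := by
  have h := Finset.sum_map (Finset.univ : Finset (Fin T.card)) (T.orderEmbOfFin rfl).toEmbedding F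
  rw [Finset.map_orderEmbOfFin_univ] at h
  rw [h]
  rfl

lemma mixture_rep (T : Finset ℝ) (hne : T.Nonempty) (hpos : ∀ z ∈ T, 0 < z) (c : ℝ → ℝ)
    (hc : ∀ z, 0 ≤ c z) :
    ∃ (γ₁ : ℝ) (p : Fin T.card → ℝ), 0 ≤ γ₁ ∧ (∀ i, 0 ≤ p i) ∧ (∑ i, p i) = 1 ∧
      ∀ y, γ₁ * ∑ i, min (T.orderEmbOfFin rfl i) y / (T.orderEmbOfFin rfl i) * p i =
        ∑ z ∈ T, c z * min z y := by
  set γ := ∑ z ∈ T, c z * z with hγ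
  have hnn : ∀ z ∈ T, 0 ≤ c z * z := fun z hz => mul_nonneg (hc z) (hpos z hz).le
  have hγ0 : 0 ≤ γ := Finset.sum_nonneg hnn
  rcases hγ0.eq_or_lt with h | h
  · have h0 : ∀ z ∈ T, c z * z = 0 := (Finset.sum_eq_zero_iff_of_nonneg hnn).1 h.symm
    refine ⟨0, fun _ => 1 / T.card, le_rfl, fun _ => by positivity, ?_, fun y => ?_⟩
    · have : (T.card : ℝ) ≠ 0 := by exact_mod_cast hne.card_pos.ne'
      simp [this]
    · rw [zero_mul]
      symm
      refine Finset.sum_eq_zero fun z hz => ?_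
      have : c z = 0 := by
        rcases mul_eq_zero.1 (h0 z hz) with h | h
        · exact h
        · exact absurd h (hpos z hz).ne'
      rw [this, zero_mul]
  · refine ⟨γ, fun i => c (T.orderEmbOfFin rfl i) * (T.orderEmbOfFin rfl i) / γ, hγ0, fun i => ?_,
      ?_, fun y => ?_⟩
    · exact div_nonneg (hnn _ (T.orderEmbOfFin_mem rfl i)) hγ0
    · rw [sum_orderEmb T (fun z => c z * z / γ), ← Finset.sum_div, ← hγ, div_self h.ne']
    · rw [sum_orderEmb T (fun z => min z y / z * (c z * z / γ)), Finset.mul_sum]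
      refine Finset.sum_congr rfl fun z hz => ?_
      have := (hpos z hz).ne'
      field_simp

lemma minsum_concave (T : Finset ℝ) (c : ℝ → ℝ) (hc : ∀ z, 0 ≤ c z) (x y t : ℝ) (h0 : 0 ≤ t)
    (h1 : t ≤ 1) : t * ∑ z ∈ T, c z * min z x + (1 - t) * ∑ z ∈ T, c z * min z y ≤
      ∑ z ∈ T, c z * min z (t * x + (1 - t) * y) := by
  rw [Finset.mul_sum, Finset.mul_sum, ← Finset.sum_add_distrib]
  refine Finset.sum_le_sum fun z _ => ?_
  have : t * min z x + (1 - t) * min z y ≤ min z (t * x + (1 - t) * y) := by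
    have a1 := min_le_left z x
    have a2 := min_le_right z x
    have a3 := min_le_left z y
    have a4 := min_le_right z y
    apply le_min <;> nlinarith
  calc _ = c z * (t * min z x + (1 - t) * min z y) := by ring
    _ ≤ _ := mul_le_mul_of_nonneg_left this (hc z)

lemma logconcave_indicator (φ : ℝ → ℝ) (L : ℝ)
    (hφ : ∀ x y t : ℝ, 0 ≤ t → t ≤ 1 → t * φ x + (1 - t) * φ y ≤ φ (t * x + (1 - t) * y)) :
    IsLogConcaveFn (indicator (Icc (-L) L) (fun x => exp (φ x))) := by
  intro x y t h0 h1
  have hnn : ∀ x, 0 ≤ indicator (Icc (-L) L) (fun x => exp (φ x)) x :=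
    fun x => indicator_nonneg (fun _ _ => (exp_pos _).le) x
  rcases h0.eq_or_lt with rfl | ht0
  · simp
  rcases h1.eq_or_lt with rfl | ht1
  · simp
  by_cases hx : x ∈ Icc (-L) L
  swap
  · rw [indicator_of_notMem hx, zero_rpow ht0.ne', zero_mul]; exact hnn _
  by_cases hy : y ∈ Icc (-L) L
  swap
  · rw [indicator_of_notMem hy, zero_rpow (by linarith), mul_zero]; exact hnn _
  have hm : t * x + (1 - t) * y ∈ Icc (-L) L := by
    constructor <;> nlinarith [hx.1, hx.2, hy.1, hy.2]
  rw [indicator_of_mem hx, indicator_of_mem hy, indicator_of_mem hm, ← exp_mul, ← exp_mul,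
    ← exp_add, exp_le_exp]
  have := hφ x y t h0 h1
  linarith

lemma integral_exp_abs {K : ℝ} (hK : 0 < K) (q : ℝ) :
    Integrable (fun x : ℝ => exp (-K * |x - q|)) ∧ ∫ x : ℝ, exp (-K * |x - q|) = 2 / K := by
  have h : ∫ x : ℝ, exp (-K * |x - q|) = 2 / K := by
    rw [integral_sub_right_eq_self (fun x => exp (-K * |x|)) q,
      integral_comp_abs (f := fun x => exp (-K * x)),
      integral_exp_mul_Ioi (by linarith : -K < 0) 0]
    simp [div_eq_mul_inv]
  refine ⟨?_, h⟩
  by_contra hc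
  rw [integral_undef hc] at h
  have : 0 < 2 / K := by positivity
  linarith

lemma hell_bound (f g : ℝ → ℝ) (hfi : Integrable f) (hf1 : ∫ x, f x = 1)
    {a K L c1 c2 c3 c4 q r : ℝ} (ha : 0 < a) (hK : 0 < K) (hL : 0 ≤ L)
    (h : ∀ x, (√(f x) - √(g x)) ^ 2 ≤ c1 * exp (-a * |x - 0|) +
      c2 * (exp (-K * |x - q|) + exp (-K * |x - r|)) + c3 * f x +
      c4 * indicator (Icc (-L) L) (fun _ => (1:ℝ)) x) :
    hellingerSq f g ≤ c1 * (2 / a) + c2 * (2 / K + 2 / K) + c3 + c4 * (2 * L) := by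
  obtain ⟨i1, e1⟩ := integral_exp_abs ha 0
  obtain ⟨i2, e2⟩ := integral_exp_abs hK q
  obtain ⟨i3, e3⟩ := integral_exp_abs hK r
  have i4 : Integrable (indicator (Icc (-L) L) (fun _ => (1:ℝ))) := by
    rw [integrable_indicator_iff measurableSet_Icc]
    exact continuous_const.integrableOn_Icc
  have e4 : ∫ x, indicator (Icc (-L) L) (fun _ => (1:ℝ)) x = 2 * L := by
    rw [integral_indicator measurableSet_Icc]
    simp
    rw [max_eq_left (by linarith)]; ring
  have j1 := i1.const_mul c1
  have j2 := (i2.add i3).const_mul c2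
  have j3 := hfi.const_mul c3
  have j4 := i4.const_mul c4
  have j12 := j1.add j2
  have j123 := j12.add j3
  have jall := j123.add j4
  have hle : hellingerSq f g ≤ _ := integral_mono_of_nonneg
    (Filter.Eventually.of_forall fun x => sq_nonneg _) jall (Filter.Eventually.of_forall h)
  refine hle.trans (le_of_eq ?_)
  rw [integral_add' j123 j4, integral_add' j12 j3, integral_add' j1 j2]
  rw [integral_const_mul, integral_const_mul, integral_const_mul, integral_const_mul,
    integral_add' i2 i3, e1, e2, e3, e4, hf1, mul_one]

lemma hell_normalize (f g : ℝ → ℝ) (hfi : Integrable f) (hf0 : ∀ x, 0 ≤ f x) (hf1 : ∫ x, f x = 1)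
    (hgi : Integrable g) (hg0 : ∀ x, 0 ≤ g x) (hZ : 0 < ∫ x, g x) (he : hellingerSq f g ≤ 1 / 4) :
    hellingerSq f (fun x => g x / ∫ x, g x) ≤ 2 * hellingerSq f g := by
  set Z := ∫ x, g x with hZdef
  have hs : 0 < √Z := Real.sqrt_pos.2 hZ
  have hZs : √Z * √Z = Z := Real.mul_self_sqrt hZ.le
  have hPi : Integrable (fun x => √(f x) * √(g x)) := by
    refine Integrable.mono' (hfi.add hgi) ?_ ?_
    · exact (Real.continuous_sqrt.comp_aestronglyMeasurable hfi.1).mul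
        (Real.continuous_sqrt.comp_aestronglyMeasurable hgi.1)
    · refine Filter.Eventually.of_forall fun x => ?_
      rw [Real.norm_of_nonneg (by positivity)]
      simp only [Pi.add_apply]
      nlinarith [Real.sq_sqrt (hf0 x), Real.sq_sqrt (hg0 x), sq_nonneg (√(f x) - √(g x)),
        hf0 x, hg0 x]
  set P := ∫ x, √(f x) * √(g x) with hP
  have h1 : hellingerSq f g = 1 + Z - 2 * P := by
    unfold hellingerSq
    have : ∀ x, (√(f x) - √(g x)) ^ 2 = f x + g x - 2 * (√(f x) * √(g x)) := fun x => by
      nlinarith [Real.sq_sqrt (hf0 x), Real.sq_sqrt (hg0 x)]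
    simp_rw [this]
    have hfg : Integrable (fun x => f x + g x) := hfi.add hgi
    rw [integral_sub hfg (hPi.const_mul 2), integral_add hfi hgi, integral_const_mul, hf1]
  have h2 : hellingerSq f (fun x => g x / Z) = 2 - 2 / √Z * P := by
    unfold hellingerSq
    have : ∀ x, (√(f x) - √(g x / Z)) ^ 2 = f x + g x / Z - 2 / √Z * (√(f x) * √(g x)) :=
      fun x => by
        rw [Real.sqrt_div (hg0 x)]
        have e1 := Real.sq_sqrt (hf0 x)
        have e2 := Real.sq_sqrt (hg0 x)
        have e3 : √Z ^ 2 = Z := Real.sq_sqrt hZ.le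
        rw [sub_sq, div_pow, e1, e2, e3]
        ring
    simp_rw [this]
    have hfg : Integrable (fun x => f x + g x / Z) := hfi.add (hgi.div_const Z)
    rw [integral_sub hfg (hPi.const_mul _),
      integral_add hfi (hgi.div_const Z), integral_const_mul, integral_div, hf1, ← hZdef,
      div_self hZ.ne']
    ring
  have h3 : P ≤ √Z := by
    have : P ≤ ∫ x, (√Z / 2 * f x + 1 / (2 * √Z) * g x) := by
      refine integral_mono hPi ((hfi.const_mul _).add (hgi.const_mul _)) fun x => ?_
      simp only
      have e1 := Real.sq_sqrt (hf0 x)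
      have e2 := Real.sq_sqrt (hg0 x)
      have : √Z / 2 * f x + 1 / (2 * √Z) * g x - √(f x) * √(g x) =
          (√Z * √(f x) - √(g x)) ^ 2 / (2 * √Z) := by
        rw [← e1, ← e2]
        simp only [Real.sqrt_sq (Real.sqrt_nonneg _)]
        field_simp
        ring
      have h0 : 0 ≤ (√Z * √(f x) - √(g x)) ^ 2 / (2 * √Z) := by positivity
      linarith
    rw [integral_add (hfi.const_mul _) (hgi.const_mul _), integral_const_mul, integral_const_mul,
      hf1, ← hZdef] at this
    have e : 1 / (2 * √Z) * Z = √Z / 2 := by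
      nth_rewrite 2 [← hZs]; field_simp
    linarith
  have h4 : 1 / 2 ≤ √Z := by
    by_contra hc
    push Not at hc
    nlinarith
  rw [h2, h1]
  have h5 : 2 - 2 / √Z * P ≤ (1 + Z - 2 * P) / √Z := by
    rw [le_div_iff₀ hs]
    have : (2 - 2 / √Z * P) * √Z = 2 * √Z - 2 * P := by field_simp
    rw [this]
    nlinarith [sq_nonneg (√Z - 1)]
  refine h5.trans ?_
  rw [div_le_iff₀ hs]
  have h6 : 0 ≤ 1 + Z - 2 * P := by nlinarith [sq_nonneg (√Z - 1)]
  nlinarith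

/-! ### The core construction -/

lemma pointwise_hell {f w φ E l X : ℝ} (hf : 0 ≤ f) (hfw : f ≤ exp w) (hwX : exp w ≤ f + X)
    (hφ : φ ≤ w) (hE : 0 ≤ E) (hgood : 1 - l ≤ w → w - φ ≤ E) :
    (√f - √(exp φ)) ^ 2 ≤ (2 + 2 * E ^ 2) * X + 2 * E ^ 2 * f + 2 * exp (1 - l) := by
  have h1 : √(exp w) ^ 2 = exp w := Real.sq_sqrt (exp_pos _).le
  have h2 : √f ^ 2 = f := Real.sq_sqrt hf
  have h3 : √f ≤ √(exp w) := Real.sqrt_le_sqrt hfw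
  have h4 : √(exp φ) ≤ √(exp w) := Real.sqrt_le_sqrt (exp_le_exp.2 hφ)
  have h5 : 0 ≤ √f := Real.sqrt_nonneg _
  have h6 : 0 ≤ √(exp φ) := Real.sqrt_nonneg _
  have hA : (√(exp w) - √f) ^ 2 ≤ X := by nlinarith
  have hB : (√(exp w) - √(exp φ)) ^ 2 ≤ E ^ 2 * exp w + exp (1 - l) := by
    rcases le_or_gt (1 - l) w with h | h
    · have hd := hgood h
      have e1 : √(exp φ) = √(exp w) * exp (-((w - φ) / 2)) := by
        rw [← Real.exp_half, ← Real.exp_half, ← exp_add]; ring_nf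
      have e2 : 1 - (w - φ) / 2 ≤ exp (-((w - φ) / 2)) := by
        have := Real.add_one_le_exp (-((w - φ) / 2)); linarith
      have e3 : √(exp w) - √(exp φ) ≤ √(exp w) * E := by
        have h0 : 0 ≤ √(exp w) := Real.sqrt_nonneg _
        rw [e1]
        have : 1 - exp (-((w - φ) / 2)) ≤ E := by linarith
        nlinarith
      have e4 : (√(exp w) - √(exp φ)) ^ 2 ≤ (√(exp w) * E) ^ 2 :=
        pow_le_pow_left₀ (by linarith) e3 2
      rw [mul_pow, h1] at e4
      have := exp_pos (1 - l)
      linarith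
    · have e1 : exp w ≤ exp (1 - l) := exp_le_exp.2 h.le
      have e2 : 0 ≤ E ^ 2 * exp w := by positivity
      nlinarith
  have hC : (√f - √(exp φ)) ^ 2 ≤ 2 * (√(exp w) - √f) ^ 2 + 2 * (√(exp w) - √(exp φ)) ^ 2 := by
    nlinarith [sq_nonneg ((√(exp w) - √f) + (√(exp w) - √(exp φ)))]
  have hD : E ^ 2 * exp w ≤ E ^ 2 * (f + X) := mul_le_mul_of_nonneg_left hwX (sq_nonneg _)
  nlinarith

set_option maxHeartbeats 4000000 in
lemma core (α β : ℝ) (hα : 0 < α) (f : ℝ → ℝ) (hf : MemF α β f) (h l L Ce : ℝ)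
    (hh : 1 ≤ h) (hl : 1 ≤ l) (hlh : l = 5 * Real.log h) (hL : L = 8 / (5 * α) * l)
    (hX : 2 ≤ 16 / (5 * α) * h ^ 6) (h12 : 12 * (l / h ^ 2) ≤ 1)
    (hCe : Ce = 4 * exp |β| / α + 16 * exp |β| + 288 + 4 * exp 1 * (8 / (5 * α)))
    (hsmall : Ce * (l / h ^ 2) ^ 2 ≤ 1 / 4) :
    ∃ (N : ℕ) (z : Fin N → ℝ) (fbar : ℝ → ℝ),
      IsDensityFn fbar ∧ IsLogConcaveFn fbar ∧ {x : ℝ | fbar x ≠ 0} ⊆ Icc (-L) L ∧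
      (N : ℝ) ≤ (16 / (5 * α) + 8 + 2 * |β|) * h * l ∧ StrictMono z ∧
      (∀ i, z i ∈ Icc 0 (2 * L)) ∧
      hellingerSq f fbar ≤ 2 * Ce * (l / h ^ 2) ^ 2 ∧
      (∀ i j : Fin N, i ≠ j → l / h ^ 6 ≤ |z i - z j|) ∧
      ∃ (γ₁ γ₂ γ₃ : ℝ) (p : Fin N → ℝ),
        0 ≤ γ₁ ∧ (∀ i, 0 ≤ p i) ∧ (∑ i, p i) = 1 ∧
        ∀ x : ℝ, fbar x = Set.indicator (Icc (-L) L)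
          (fun y => Real.exp (γ₁ * (∑ i, min (z i) (y + L) / z i * p i) -
            γ₂ * (y + L) + γ₃)) x := by
  obtain ⟨⟨hmeas, hf0, hf1⟩, husc, hlc, henv⟩ := hf
  have hfi : Integrable f := by
    by_contra hc
    rw [integral_undef hc] at hf1
    exact zero_ne_one hf1
  have hhp : 0 < h := by linarith
  have hlp : 0 < l := by linarith
  have hLp : 0 < L := by rw [hL]; positivity
  have hexp4 : exp (-(4 / 5 * l)) = 1 / h ^ 4 := by
    rw [hlh, show -(4 / 5 * (5 * Real.log h)) = -(((4:ℕ):ℝ) * Real.log h) by push_cast; ring,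
      exp_neg, exp_nat_mul, Real.exp_log hhp, one_div]
  have hexp5 : exp (-l) = 1 / h ^ 5 := by
    rw [hlh, show -(5 * Real.log h) = -(((5:ℕ):ℝ) * Real.log h) by push_cast; ring,
      exp_neg, exp_nat_mul, Real.exp_log hhp, one_div]
  set A := exp |β| with hA
  have hAp : 0 < A := exp_pos _
  have hfA : ∀ x, f x ≤ A := fun x => (henv x).trans (exp_le_exp.2 (by
    have := le_abs_self β
    have := mul_nonneg hα.le (abs_nonneg x)
    linarith))
  have hα2 : 0 < α / 2 := by positivity
  have hout : ∀ x, x ∉ Icc (-L) L → f x ≤ A / h ^ 4 * exp (-(α / 2) * |x - 0|) := by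
    intro x hx
    have hxL : L ≤ |x| := by
      by_contra hc
      push Not at hc
      exact hx (abs_le.1 hc.le)
    refine (henv x).trans ?_
    rw [div_eq_mul_one_div, ← hexp4, hA, ← exp_add, ← exp_add, exp_le_exp, sub_zero]
    have h1 : α / 2 * L = 4 / 5 * l := by rw [hL]; field_simp; ring
    have h2 : α / 2 * L ≤ α / 2 * |x| := by gcongr
    have := le_abs_self β
    linarith
  -- comparison of small quantities
  have hθ0 : 1 / h ^ 4 ≤ (l / h ^ 2) ^ 2 := by
    rw [div_pow, ← pow_mul]
    gcongr
    nlinarith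
  have hθ1 : l / h ^ 5 ≤ (l / h ^ 2) ^ 2 := by
    rw [div_pow, ← pow_mul]
    have : h ^ (2 * 2) ≤ h ^ 5 := pow_le_pow_right₀ hh (by norm_num)
    have h2 : l ≤ l ^ 2 := by nlinarith
    gcongr
  obtain ⟨x0, hx0, hfx0⟩ : ∃ x0 ∈ Icc (-L) L, 0 < f x0 := by
    by_contra hc
    push Not at hc
    obtain ⟨i1, e1⟩ := integral_exp_abs hα2 0
    have hle : ∫ x, f x ≤ ∫ x, A / h ^ 4 * exp (-(α / 2) * |x - 0|) := by
      refine integral_mono hfi (i1.const_mul _) fun x => ?_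
      by_cases hx : x ∈ Icc (-L) L
      · exact (hc x hx).trans (by positivity)
      · exact hout x hx
    rw [integral_const_mul, e1, hf1] at hle
    have h1 : A / h ^ 4 * (2 / (α / 2)) = 4 * A / α * (1 / h ^ 4) := by field_simp; ring
    have h2 : 4 * A / α * (1 / h ^ 4) ≤ 4 * A / α * (l / h ^ 2) ^ 2 := by gcongr
    have h3 : 4 * A / α ≤ Ce := by
      rw [hCe]
      have : 0 < 16 * A + 288 + 4 * exp 1 * (8 / (5 * α)) := by positivity
      linarith
    have h4 : 4 * A / α * (l / h ^ 2) ^ 2 ≤ Ce * (l / h ^ 2) ^ 2 := by gcongr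
    linarith
  set K := h ^ 4 with hK
  have hKp : 0 < K := by positivity
  have hK1 : 1 ≤ K := one_le_pow₀ hh
  obtain ⟨w, hwc, hwlip, hwA, q, r, hwf⟩ := lipschitz_regularization f hf0 husc hlc hfA hKp.le
    x0 hx0 hfx0
  have hwβ : ∀ x, w x ≤ |β| := fun x => exp_le_exp.1 (hwA x)
  set u : ℝ → ℝ := fun y => w (y - L) with hu
  have huc : ConcaveOn ℝ univ u := by
    refine ⟨convex_univ, fun x _ y _ a b ha hb hab => ?_⟩
    have := hwc.2 (mem_univ (x - L)) (mem_univ (y - L)) ha hb hab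
    simp only [hu, smul_eq_mul] at this ⊢
    rw [show a * x + b * y - L = a * (x - L) + b * (y - L) by
      linear_combination L * hab]
    exact this
  have hulip : ∀ x y, u x - u y ≤ K * |x - y| := by
    intro x y
    have := hwlip (x - L) (y - L)
    rwa [show x - L - (y - L) = x - y by ring] at this
  -- the lattice
  set X := 16 / (5 * α) * h ^ 6 with hXdef
  set M := ⌊X⌋₊ with hM
  have hMX : (M : ℝ) ≤ X := Nat.floor_le (by linarith)
  have hXM : X < M + 1 := Nat.lt_floor_add_one X
  have hMp' : (0:ℝ) < M := by linarith
  have hMp : 0 < M := by exact_mod_cast hMp'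
  set d := 2 * L / M with hd
  have hdp : 0 < d := by positivity
  have hMd : (M:ℝ) * d = 2 * L := by rw [hd]; field_simp
  have hLX : 2 * L = X * (l / h ^ 6) := by
    rw [hL, hXdef]; field_simp; ring
  have hlh6 : 0 < l / h ^ 6 := by positivity
  have hd_lb : l / h ^ 6 ≤ d := by
    rw [hd, le_div_iff₀ hMp', hLX, mul_comm]
    exact mul_le_mul_of_nonneg_right hMX hlh6.le
  have hd_ub : d ≤ 2 * (l / h ^ 6) := by
    rw [hd, div_le_iff₀ hMp', hLX,
      show 2 * (l / h ^ 6) * (M:ℝ) = (2 * M) * (l / h ^ 6) by ring]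
    exact mul_le_mul_of_nonneg_right (by linarith) hlh6.le
  have hKd : K * d ≤ 2 * (l / h ^ 2) := by
    calc K * d ≤ K * (2 * (l / h ^ 6)) := by gcongr
      _ = 2 * (l / h ^ 2) := by rw [hK]; field_simp
  obtain ⟨T, a, b, c, hTm, hTc, hc, hT⟩ := lattice_approx u huc (K := K) (d := d) (η := 1 / h)
    (ρ := l / h) (τ := -l) (B := |β|) hulip (fun x => hwβ _) (by linarith [abs_nonneg β]) hdp
    (by positivity) ((div_le_one hhp).2 hh) (by positivity) M hMp
  set E := 12 * (l / h ^ 2) with hE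
  have hE0 : 0 ≤ E := by positivity
  have herr : 2 * (1 / h) * (l / h + (K + 1) * d) + K * d ≤ E := by
    have h1 : (K + 1) * d ≤ 4 * (l / h ^ 2) := by
      have := le_mul_of_one_le_left hdp.le hK1
      rw [add_mul, one_mul]
      linarith
    have h2 : 1 / h * ((K + 1) * d) ≤ 1 * ((K + 1) * d) := by
      gcongr
      exact (div_le_one hhp).2 hh
    have h3 : 1 / h * (l / h) = l / h ^ 2 := by field_simp
    rw [hE]
    linarith
  set φ : ℝ → ℝ := fun x => a + b * (x + L) + ∑ z ∈ T, c z * min z (x + L) with hφ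
  have hφc : Continuous φ := by
    simp only [hφ]; fun_prop
  have hφconc : ∀ x y t : ℝ, 0 ≤ t → t ≤ 1 →
      t * φ x + (1 - t) * φ y ≤ φ (t * x + (1 - t) * y) := by
    intro x y t h0 h1
    have := minsum_concave T c hc (x + L) (y + L) t h0 h1
    rw [show t * (x + L) + (1 - t) * (y + L) = t * x + (1 - t) * y + L by ring] at this
    simp only [hφ]
    linarith
  set g : ℝ → ℝ := indicator (Icc (-L) L) (fun x => exp (φ x)) with hg
  have hg0 : ∀ x, 0 ≤ g x := fun x => indicator_nonneg (fun _ _ => (exp_pos _).le) x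
  have hgi : Integrable g := by
    rw [hg, integrable_indicator_iff measurableSet_Icc]
    exact (Real.continuous_exp.comp hφc).integrableOn_Icc
  have hZ : 0 < ∫ x, g x := by
    rw [integral_pos_iff_support_of_nonneg hg0 hgi]
    have : Icc (-L) L ⊆ Function.support g := by
      intro x hx
      rw [Function.mem_support, hg, indicator_of_mem hx]
      exact (exp_pos _).ne'
    refine lt_of_lt_of_le ?_ (measure_mono this)
    rw [Real.volume_Icc, ENNReal.ofReal_pos]
    linarith
  have hφw : ∀ x ∈ Icc (-L) L, φ x ≤ w x ∧ (1 - l ≤ w x → w x - φ x ≤ E) := by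
    intro x hx
    have := hT (x + L) ⟨by linarith [hx.1], by rw [hMd]; linarith [hx.2]⟩
    simp only [hu, add_sub_cancel_right] at this
    refine ⟨this.1, fun hg => (this.2 (by linarith)).trans herr⟩
  have hpt : ∀ x, (√(f x) - √(g x)) ^ 2 ≤ A / h ^ 4 * exp (-(α / 2) * |x - 0|) +
      (2 + 2 * E ^ 2) * A * (exp (-K * |x - q|) + exp (-K * |x - r|)) + 2 * E ^ 2 * f x +
      2 * exp (1 - l) * indicator (Icc (-L) L) (fun _ => (1:ℝ)) x := by
    intro x
    have p1 : 0 ≤ A / h ^ 4 * exp (-(α / 2) * |x - 0|) := by positivity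
    by_cases hx : x ∈ Icc (-L) L
    · rw [hg, indicator_of_mem hx, indicator_of_mem hx]
      have hw := hwf x hx
      have := pointwise_hell (hf0 x) hw.1
        (X := A * exp (-K * |x - q|) + A * exp (-K * |x - r|)) (by linarith [hw.2])
        (hφw x hx).1 hE0 (hφw x hx).2
      linarith
    · rw [hg, indicator_of_notMem hx, indicator_of_notMem hx, Real.sqrt_zero, sub_zero,
        Real.sq_sqrt (hf0 x)]
      have := hout x hx
      have p2 : 0 ≤ (2 + 2 * E ^ 2) * A * (exp (-K * |x - q|) + exp (-K * |x - r|)) := by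
        positivity
      have p3 : 0 ≤ 2 * E ^ 2 * f x := mul_nonneg (by positivity) (hf0 x)
      linarith
  have hhell : hellingerSq f g ≤ Ce * (l / h ^ 2) ^ 2 := by
    refine (hell_bound f g hfi hf1 hα2 hKp hLp.le hpt).trans ?_
    have t1 : A / h ^ 4 * (2 / (α / 2)) ≤ 4 * A / α * (l / h ^ 2) ^ 2 := by
      calc _ = 4 * A / α * (1 / h ^ 4) := by field_simp; ring
        _ ≤ _ := by gcongr
    have t2 : (2 + 2 * E ^ 2) * A * (2 / K + 2 / K) ≤ 16 * A * (l / h ^ 2) ^ 2 := by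
      have hE2 : E ^ 2 ≤ 1 := pow_le_one₀ hE0 h12
      calc _ ≤ (2 + 2 * 1) * A * (2 / K + 2 / K) := by gcongr
        _ = 16 * A * (1 / h ^ 4) := by rw [hK]; ring
        _ ≤ _ := by gcongr
    have t3 : 2 * E ^ 2 = 288 * (l / h ^ 2) ^ 2 := by rw [hE]; ring
    have t4 : 2 * exp (1 - l) * (2 * L) ≤ 4 * exp 1 * (8 / (5 * α)) * (l / h ^ 2) ^ 2 := by
      calc _ = 4 * exp 1 * (8 / (5 * α)) * (l / h ^ 5) := by
            rw [sub_eq_add_neg, exp_add, hexp5, hL]; ring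
        _ ≤ _ := by gcongr
    rw [hCe]
    linarith
  have hnorm := hell_normalize f g hfi hf0 hf1 hgi hg0 hZ (hhell.trans hsmall)
  set Z := ∫ x, g x with hZd
  -- knots
  have hTpos : ∀ z ∈ T, 0 < z := by
    intro z hz
    obtain ⟨j, h1, _, rfl⟩ := hTm z hz
    have : (0:ℝ) < j := by exact_mod_cast h1
    positivity
  set T' := insert ((M:ℝ) * d) T with hT'
  have hT'm : ∀ z ∈ T', ∃ j : ℕ, 1 ≤ j ∧ j ≤ M ∧ z = j * d := by
    intro z hz
    rcases Finset.mem_insert.1 hz with rfl | hz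
    · exact ⟨M, hMp, le_rfl, rfl⟩
    · obtain ⟨j, h1, h2, h3⟩ := hTm z hz
      exact ⟨j, h1, h2.le, h3⟩
  have hMT : (M:ℝ) * d ∉ T := by
    intro hmem
    obtain ⟨j, _, h2, h3⟩ := hTm _ hmem
    have : (M:ℝ) = j := mul_right_cancel₀ hdp.ne' h3
    have : M = j := by exact_mod_cast this
    omega
  have hT'pos : ∀ z ∈ T', 0 < z := by
    intro z hz
    obtain ⟨j, h1, _, rfl⟩ := hT'm z hz
    have : (0:ℝ) < j := by exact_mod_cast h1
    positivity
  set c' : ℝ → ℝ := fun z => if z ∈ T then c z else 0 with hc'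
  have hc'0 : ∀ z, 0 ≤ c' z := by
    intro z
    simp only [hc']
    split_ifs
    · exact hc z
    · exact le_rfl
  have hsumc : ∀ y, ∑ z ∈ T', c' z * min z y = ∑ z ∈ T, c z * min z y := by
    intro y
    rw [hT', Finset.sum_insert hMT]
    have : c' (M * d) = 0 := by simp only [hc']; rw [if_neg hMT]
    rw [this, zero_mul, zero_add]
    refine Finset.sum_congr rfl fun z hz => ?_
    simp only [hc']; rw [if_pos hz]
  obtain ⟨γ₁, p, hγ, hp0, hp1, hrep⟩ := mixture_rep T' ⟨_, Finset.mem_insert_self _ _⟩ hT'pos c' hc'0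
  have hgZ : (fun x => g x / Z) = indicator (Icc (-L) L) (fun x => exp (φ x - Real.log Z)) := by
    funext x
    by_cases hx : x ∈ Icc (-L) L
    · rw [hg, indicator_of_mem hx, indicator_of_mem hx, exp_sub, Real.exp_log hZ]
    · rw [hg, indicator_of_notMem hx, indicator_of_notMem hx, zero_div]
  refine ⟨T'.card, T'.orderEmbOfFin rfl, fun x => g x / Z, ⟨?_, ?_, ?_⟩, ?_, ?_, ?_, ?_, ?_, ?_,
    ?_, ?_⟩
  · rw [hgZ]
    exact (by fun_prop : Measurable (fun x => exp (φ x - Real.log Z))).indicator measurableSet_Icc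
  · exact fun x => div_nonneg (hg0 x) hZ.le
  · rw [integral_div, ← hZd, div_self hZ.ne']
  · rw [hgZ]
    refine logconcave_indicator _ L fun x y t h0 h1 => ?_
    have := hφconc x y t h0 h1
    linarith
  · intro x hx
    by_contra hc
    apply hx
    simp only [hg]
    rw [indicator_of_notMem hc, zero_div]
  · have h1 : (T'.card : ℝ) = T.card + 1 := by
      rw [hT', Finset.card_insert_of_notMem hMT]; push_cast; ring
    rw [h1]
    have h2 : (M * d + 2 * (|β| - -l)) / (l / h) ≤ (16 / (5 * α) + 2 + 2 * |β|) * h * l := by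
      rw [hMd, div_le_iff₀ (by positivity)]
      have e1 : (16 / (5 * α) + 2 + 2 * |β|) * h * l * (l / h) =
        (16 / (5 * α) + 2 + 2 * |β|) * l * l := by field_simp
      have e2 : 2 * L = 16 / (5 * α) * l := by rw [hL]; ring
      rw [e1, e2]
      have e3 : 0 ≤ 16 / (5 * α) * l := by positivity
      have e4 : 0 ≤ |β| := abs_nonneg β
      have e5 : 0 ≤ 2 * |β| + 2 * l := by positivity
      nlinarith [mul_nonneg e3 (by linarith : 0 ≤ l - 1), mul_nonneg e4 (by linarith : 0 ≤ l - 1),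
        mul_nonneg e4 (by nlinarith : 0 ≤ l * l - 1)]
    have h3 : Real.log (1 + K) ≤ 2 * l := by
      have e1 : 1 + K ≤ exp 1 * K := by
        have := mul_le_mul_of_nonneg_right (Real.add_one_le_exp (1:ℝ)) hKp.le
        linarith
      have e2 := Real.log_le_log (by positivity) e1
      rw [Real.log_mul (exp_pos _).ne' hKp.ne', Real.log_exp, hK, Real.log_pow] at e2
      push_cast at e2
      rw [hK]
      linarith
    have h4 : 2 * Real.log (1 + K) / (1 / h) ≤ 4 * h * l := by
      rw [div_div_eq_mul_div, div_one]
      have := mul_le_mul_of_nonneg_right h3 hhp.le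
      linarith
    have h5 : 1 ≤ h * l := one_le_mul_of_one_le_of_one_le hh hl
    linarith
  · exact (T'.orderEmbOfFin rfl).strictMono
  · intro i
    obtain ⟨j, _, h2, h3⟩ := hT'm _ (T'.orderEmbOfFin_mem rfl i)
    rw [h3, ← hMd]
    have : (j:ℝ) ≤ M := by exact_mod_cast h2
    exact ⟨by positivity, by gcongr⟩
  · refine hnorm.trans ?_
    linarith
  · intro i j hij
    obtain ⟨k, _, _, h3⟩ := hT'm _ (T'.orderEmbOfFin_mem rfl i)
    obtain ⟨m, _, _, h4⟩ := hT'm _ (T'.orderEmbOfFin_mem rfl j)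
    have hne : k ≠ m := by
      rintro rfl
      exact hij ((T'.orderEmbOfFin rfl).injective (h3.trans h4.symm))
    rw [h3, h4, ← sub_mul, abs_mul, abs_of_pos hdp]
    have h1 : (1:ℝ) ≤ |(k:ℝ) - m| := by
      have : (1:ℤ) ≤ |(k:ℤ) - m| := Int.one_le_abs (by omega)
      exact_mod_cast this
    exact hd_lb.trans (le_mul_of_one_le_left hdp.le h1)
  · refine ⟨γ₁, -b, a - Real.log Z, p, hγ, hp0, hp1, fun x => ?_⟩
    refine (congrFun hgZ x).trans ?_
    congr 1
    funext y
    rw [hrep, hsumc]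
    simp only [hφ]
    ring_nf

lemma large_n (α : ℝ) (hα : 0 < α) (Ce : ℝ) (hCe : 1 ≤ Ce) :
    ∀ᶠ n : ℕ in Filter.atTop, 1 ≤ (n:ℝ) ∧ 1 ≤ Real.log n ∧
      2 ≤ 16 / (5 * α) * ((n:ℝ) ^ ((1:ℝ)/5)) ^ 6 ∧
      12 * (Real.log n / ((n:ℝ) ^ ((1:ℝ)/5)) ^ 2) ≤ 1 ∧
      Ce * (Real.log n / ((n:ℝ) ^ ((1:ℝ)/5)) ^ 2) ^ 2 ≤ 1 / 4 := by
  have hcast : Filter.Tendsto (fun n : ℕ => (n:ℝ)) Filter.atTop Filter.atTop :=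
    tendsto_natCast_atTop_atTop
  have a1 : ∀ᶠ x : ℝ in Filter.atTop, 1 ≤ x := Filter.eventually_ge_atTop 1
  have a2 : ∀ᶠ x : ℝ in Filter.atTop, 1 ≤ Real.log x :=
    Real.tendsto_log_atTop.eventually_ge_atTop 1
  have a3 : ∀ᶠ x : ℝ in Filter.atTop, 5 * α ≤ x := Filter.eventually_ge_atTop _
  have hδ : (0:ℝ) < 1 / (12 * Ce) := by positivity
  have a4 := (isLittleO_log_rpow_atTop (show (0:ℝ) < 2 / 5 by norm_num)).bound hδ
  filter_upwards [hcast.eventually a1, hcast.eventually a2, hcast.eventually a3,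
    hcast.eventually a4] with n h1 h2 h3 h4
  generalize (n:ℝ) = x at *
  have hx : 0 < x := by linarith
  have e2 : (x ^ ((1:ℝ)/5)) ^ 2 = x ^ ((2:ℝ)/5) := by
    rw [← Real.rpow_natCast, ← Real.rpow_mul hx.le]; norm_num
  have hp : 0 < x ^ ((2:ℝ)/5) := Real.rpow_pos_of_pos hx _
  have e6 : x ≤ (x ^ ((1:ℝ)/5)) ^ 6 := by
    rw [← Real.rpow_natCast, ← Real.rpow_mul hx.le]
    calc x = x ^ (1:ℝ) := (Real.rpow_one x).symm
      _ ≤ _ := Real.rpow_le_rpow_of_exponent_le h1 (by norm_num)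
  rw [Real.norm_of_nonneg (by linarith), Real.norm_of_nonneg hp.le] at h4
  have h5 : Real.log x / x ^ ((2:ℝ)/5) ≤ 1 / (12 * Ce) := (div_le_iff₀ hp).2 h4
  have h6 : 0 ≤ Real.log x / x ^ ((2:ℝ)/5) := div_nonneg (by linarith) hp.le
  rw [e2]
  set θ := Real.log x / x ^ ((2:ℝ)/5)
  have h7 : 12 * (Ce * θ) ≤ 1 := by
    rw [le_div_iff₀ (by positivity)] at h5; linarith
  have h8 : θ ≤ Ce * θ := by nlinarith
  refine ⟨h1, h2, ?_, by linarith, by nlinarith⟩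
  have : 5 * α ≤ (x ^ ((1:ℝ)/5)) ^ 6 := h3.trans e6
  calc (2:ℝ) ≤ 16 / (5 * α) * (5 * α) := by rw [div_mul_cancel₀ _ (by positivity)]; norm_num
    _ ≤ _ := by gcongr

/-- Corollary: for `f₀ ∈ F_{α,β}` and `n ≥ n₀(α,β)` there is a
log-concave density `f̄ₙ` supported on `[−(8/(5α)) log n, (8/(5α)) log n]`, piecewise
log-linear with at most `C(α,β) n^{1/5} log n` knots (given through its explicit
mixture representation), with `h²(f₀, f̄ₙ) ≤ C(α,β) (log n)² n^{−4/5}`, and whose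
knots are `c n^{−6/5} log n`-separated for a universal constant `c > 0`. -/
theorem piecewise_loglinear_approximation_corollary :
    ∃ c : ℝ, 0 < c ∧
      ∀ α : ℝ, 0 < α → ∀ β : ℝ,
        ∃ C : ℝ, 0 < C ∧ ∃ n₀ : ℕ,
          ∀ f₀ : ℝ → ℝ, MemF α β f₀ →
            ∀ n : ℕ, n₀ ≤ n →
              ∃ (N : ℕ) (z : Fin N → ℝ) (fbar : ℝ → ℝ),
                -- f̄ₙ is a log-concave density
                IsDensityFn fbar ∧ IsLogConcaveFn fbar ∧
                -- supported on [−(8/(5α)) log n, (8/(5α)) log n]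
                {x : ℝ | fbar x ≠ 0} ⊆
                  Icc (-((8 / (5 * α)) * Real.log n)) ((8 / (5 * α)) * Real.log n) ∧
                -- at most C n^{1/5} log n knots
                (N : ℝ) ≤ C * (n : ℝ) ^ ((1:ℝ)/5) * Real.log n ∧
                StrictMono z ∧
                (∀ i, z i ∈ Icc 0 (2 * (8 / (5 * α)) * Real.log n)) ∧
                -- Hellinger approximation
                hellingerSq f₀ fbar ≤ C * (Real.log n) ^ 2 * (n : ℝ) ^ (-(4:ℝ)/5) ∧
                -- the knots are c n^{-6/5} log n separated
                (∀ i j : Fin N, i ≠ j →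
                  c * (n : ℝ) ^ (-(6:ℝ)/5) * Real.log n ≤ |z i - z j|) ∧
                -- piecewise log-linear: explicit mixture representation of the
                -- log-density on the support, with kinks at the knots
                ∃ (γ₁ γ₂ γ₃ : ℝ) (p : Fin N → ℝ),
                  0 ≤ γ₁ ∧ (∀ i, 0 ≤ p i) ∧ (∑ i, p i) = 1 ∧
                  ∀ x : ℝ,
                    fbar x = Set.indicator
                      (Icc (-((8 / (5 * α)) * Real.log n)) ((8 / (5 * α)) * Real.log n))
                      (fun y => Real.exp
                        (γ₁ * (∑ i, min (z i) (y + (8 / (5 * α)) * Real.log n) / z i * p i) -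
                          γ₂ * (y + (8 / (5 * α)) * Real.log n) + γ₃)) x := by
  refine ⟨1, one_pos, fun α hα β => ?_⟩
  set Ce := 4 * exp |β| / α + 16 * exp |β| + 288 + 4 * exp 1 * (8 / (5 * α)) with hCe
  have hCe1 : 1 ≤ Ce := by
    have : 0 ≤ 4 * exp |β| / α + 16 * exp |β| + 4 * exp 1 * (8 / (5 * α)) := by positivity
    rw [hCe]; linarith
  have hC1 : 0 ≤ 16 / (5 * α) + 8 + 2 * |β| := by positivity
  obtain ⟨n₀, hn₀⟩ := Filter.eventually_atTop.1 (large_n α hα Ce hCe1)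
  refine ⟨2 * Ce + (16 / (5 * α) + 8 + 2 * |β|), by linarith, n₀, fun f₀ hf n hn => ?_⟩
  obtain ⟨hn1, hl, hX, h12, hsmall⟩ := hn₀ n hn
  have hn0 : (0:ℝ) < n := by linarith
  set h := (n:ℝ) ^ ((1:ℝ)/5) with hh
  have hh1 : 1 ≤ h := Real.one_le_rpow hn1 (by norm_num)
  have hhp : 0 < h := by linarith
  have hlh : Real.log n = 5 * Real.log h := by
    rw [hh, Real.log_rpow hn0]; ring
  obtain ⟨N, z, fbar, h1, h2, h3, h4, h5, h6, h7, h8, h9⟩ := core α β hα f₀ hf h (Real.log n)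
    (8 / (5 * α) * Real.log n) Ce hh1 hl hlh rfl hX h12 hCe hsmall
  have hlp : 0 ≤ Real.log n := by linarith
  refine ⟨N, z, fbar, h1, h2, h3, h4.trans ?_, h5, fun i => ?_, h7.trans ?_, fun i j hij => ?_, h9⟩
  · have : 16 / (5 * α) + 8 + 2 * |β| ≤ 2 * Ce + (16 / (5 * α) + 8 + 2 * |β|) := by linarith
    exact mul_le_mul_of_nonneg_right (mul_le_mul_of_nonneg_right this hhp.le) hlp
  · have := h6 i
    rwa [← mul_assoc] at this
  · have e : (n:ℝ) ^ (-(4:ℝ)/5) = 1 / h ^ 4 := by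
      rw [hh, ← Real.rpow_natCast, ← Real.rpow_mul hn0.le, one_div, ← Real.rpow_neg hn0.le]
      norm_num
    rw [e, div_pow, ← pow_mul]
    have e2 : 0 ≤ Real.log n ^ 2 / h ^ (2 * 2) := by positivity
    calc 2 * Ce * (Real.log n ^ 2 / h ^ (2 * 2))
        ≤ (2 * Ce + (16 / (5 * α) + 8 + 2 * |β|)) * (Real.log n ^ 2 / h ^ (2 * 2)) := by
          gcongr; linarith
      _ = _ := by norm_num; ring
  · have e : (n:ℝ) ^ (-(6:ℝ)/5) = 1 / h ^ 6 := by
      rw [hh, ← Real.rpow_natCast, ← Real.rpow_mul hn0.le, one_div, ← Real.rpow_neg hn0.le]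
      norm_num
    rw [e]
    refine le_trans (le_of_eq ?_) (h8 i j hij)
    ring
end

section
/- Let Z₁,…,Zₙ be i.i.d. random variables with density f ∈ F_{α,β}, where α > 0 and β ∈ ℝ. Then there exists a constant C₀(α,β,r) depending only on α, β, r such that for any r ≥ 1, t ≥ r^r, and n ≥ e^r, P( (1/√n) | ∑_{i=1}^n ( |Zᵢ|^r − E|Zᵢ|^r ) | ≥ C₀(α,β,r) t ) ≤ exp( −t^{1/r} ). -/
open MeasureTheory Real Set

/-- The probability measure on ℝ with Lebesgue density `f`. -/
noncomputable def densityMeasure (f : ℝ → ℝ) : Measure ℝ :=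
  MeasureTheory.volume.withDensity fun x => ENNReal.ofReal (f x)

lemma aux_exp_upper {x : ℝ} (hx : 0 ≤ x) : exp x ≤ 1 + x + x ^ 2 * exp x := by
  by_cases h1 : x ≤ 1
  · have := abs_le.1 (Real.abs_exp_sub_one_sub_id_le (x := x) (by rw [abs_of_nonneg hx]; exact h1))
    have h2 : 1 ≤ exp x := Real.one_le_exp hx
    nlinarith [this.2, mul_nonneg (sq_nonneg x) (sub_nonneg.2 h2)]
  · have : 1 ≤ x ^ 2 := by nlinarith
    nlinarith [exp_pos x, mul_nonneg (sub_nonneg.2 this) (exp_pos x).le]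

lemma aux_exp_lower {x : ℝ} (hx : 0 ≤ x) : exp (-x) ≤ 1 - x + x ^ 2 := by
  by_cases h1 : x ≤ 1
  · have := abs_le.1 (Real.abs_exp_sub_one_sub_id_le (x := -x)
      (by rw [abs_neg, abs_of_nonneg hx]; exact h1))
    nlinarith [this.2]
  · have : exp (-x) ≤ 1 := Real.exp_le_one_iff.2 (by linarith)
    nlinarith

lemma aux_pow_le_exp {a s x : ℝ} (ha : 0 < a) (hs : 0 < s) (hx : 0 ≤ x) :
    x ^ s ≤ (s / a) ^ s * exp (a * x) := by
  have h1 : x ≤ (s / a) * exp (a * x / s) := by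
    have := Real.add_one_le_exp (a * x / s)
    have h2 : x = (s / a) * (a * x / s) := by field_simp
    calc x = (s / a) * (a * x / s) := h2
      _ ≤ _ := by gcongr; linarith
  calc x ^ s ≤ ((s / a) * exp (a * x / s)) ^ s := Real.rpow_le_rpow hx h1 hs.le
    _ = (s / a) ^ s * exp (a * x) := by
      rw [Real.mul_rpow (by positivity) (exp_pos _).le, ← Real.exp_mul]
      congr 2; field_simp

lemma aux_log {r : ℝ} (hr : 1 ≤ r) {n : ℝ} (hn : 1 ≤ n) :
    (1 + log n) ^ (r - 1) ≤ (2 * r) ^ r * sqrt n := by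
  have h0 : 0 ≤ log n := Real.log_nonneg hn
  have hy : 0 < n ^ (1 / (2 * r)) := Real.rpow_pos_of_pos (by linarith) _
  have h1 : 1 + log n ≤ 2 * r * n ^ (1 / (2 * r)) := by
    have := Real.log_le_sub_one_of_pos hy
    rw [Real.log_rpow (by linarith)] at this
    have h2 : log n = 2 * r * (1 / (2 * r) * log n) := by field_simp
    rw [h2]
    nlinarith
  calc (1 + log n) ^ (r - 1) ≤ (1 + log n) ^ r :=
        Real.rpow_le_rpow_of_exponent_le (by linarith) (by linarith)
    _ ≤ (2 * r * n ^ (1 / (2 * r))) ^ r := Real.rpow_le_rpow (by linarith) h1 (by linarith)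
    _ = (2 * r) ^ r * sqrt n := by
      rw [Real.mul_rpow (by linarith) hy.le, ← Real.rpow_mul (by linarith), Real.sqrt_eq_rpow]
      congr 2; field_simp

lemma aux_integrable_exp_neg_abs {b : ℝ} (hb : 0 < b) :
    Integrable (fun x : ℝ => exp (-b * |x|)) := by
  by_contra h
  have h1 := integral_comp_abs (f := fun x => exp (-b * x))
  rw [integral_undef h, integral_exp_mul_Ioi (by linarith) 0] at h1
  simp at h1
  exact hb.ne' h1

lemma aux_chernoff (μ : Measure ℝ) [IsProbabilityMeasure μ] {a K r : ℝ}
    (hr : 1 ≤ r) (hinte : Integrable (fun x => exp (a * |x|)) μ)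
    (hK : ∫ x, exp (a * |x|) ∂μ ≤ K) (hintr : Integrable (fun x => |x| ^ r) μ)
    (h : ℝ → ℝ) (hm : Measurable h) (θ V : ℝ) (hV : 0 ≤ V)
    (hb : ∀ x, exp (h x) ≤ 1 + θ * |x| ^ r + V * exp (a * |x|)) (n : ℕ) (s : ℝ) :
    (Measure.pi fun _ : Fin n => μ).real {z | s ≤ ∑ i, h (z i)} ≤
      exp (-s + n * (θ * ∫ x, |x| ^ r ∂μ) + n * (V * K)) := by
  have hG : Integrable (fun x => 1 + θ * |x| ^ r + V * exp (a * |x|)) μ :=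
    ((integrable_const 1).add (hintr.const_mul θ)).add (hinte.const_mul V)
  have hE : Integrable (fun x => exp (h x)) μ := by
    refine hG.mono' hm.exp.aestronglyMeasurable (Filter.Eventually.of_forall fun x => ?_)
    rw [Real.norm_eq_abs, abs_of_pos (exp_pos _)]
    exact hb x
  have hEle : ∫ x, exp (h x) ∂μ ≤ exp (θ * (∫ x, |x| ^ r ∂μ) + V * K) := by
    calc ∫ x, exp (h x) ∂μ ≤ ∫ x, (1 + θ * |x| ^ r + V * exp (a * |x|)) ∂μ :=
          integral_mono hE hG hb
      _ = 1 + θ * (∫ x, |x| ^ r ∂μ) + V * ∫ x, exp (a * |x|) ∂μ := by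
          rw [integral_add (f := fun x => 1 + θ * |x| ^ r)
              ((integrable_const 1).add (hintr.const_mul θ)) (hinte.const_mul V),
            integral_add (integrable_const 1) (hintr.const_mul θ),
            integral_const_mul, integral_const_mul]
          simp
      _ ≤ 1 + θ * (∫ x, |x| ^ r ∂μ) + V * K := by gcongr
      _ ≤ _ := by
          have := Real.add_one_le_exp (θ * (∫ x, |x| ^ r ∂μ) + V * K)
          linarith
  have hI : Integrable (fun z : Fin n → ℝ => ∏ i, exp (h (z i)))
      (Measure.pi fun _ : Fin n => μ) :=
    Integrable.fintype_prod (f := fun _ x => exp (h x)) (fun _ => hE)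
  have hM := mul_meas_ge_le_integral_of_nonneg (μ := Measure.pi fun _ : Fin n => μ)
    (f := fun z : Fin n → ℝ => ∏ i, exp (h (z i)))
    (Filter.Eventually.of_forall fun z => Finset.prod_nonneg fun i _ => (exp_pos _).le) hI (exp s)
  rw [integral_fintype_prod_eq_pow (fun x => exp (h x)), Fintype.card_fin] at hM
  have hset : {z : Fin n → ℝ | exp s ≤ ∏ i, exp (h (z i))} = {z | s ≤ ∑ i, h (z i)} := by
    ext z
    simp only [mem_ofPred_eq, ← Real.exp_sum, Real.exp_le_exp]
  rw [hset] at hM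
  have h3 : (∫ x, exp (h x) ∂μ) ^ n ≤ exp (n * (θ * (∫ x, |x| ^ r ∂μ) + V * K)) := by
    rw [Real.exp_nat_mul]
    exact pow_le_pow_left₀ (integral_nonneg fun x => (exp_pos _).le) hEle n
  have h4 : exp (-s + n * (θ * ∫ x, |x| ^ r ∂μ) + n * (V * K)) =
      exp (-s) * exp (n * (θ * (∫ x, |x| ^ r ∂μ) + V * K)) := by
    rw [← Real.exp_add]; ring_nf
  rw [h4]
  have h5 : exp (-s) * exp s = 1 := by rw [← Real.exp_add]; simp
  calc _ = exp (-s) * (exp s * (Measure.pi fun _ : Fin n => μ).real {z | s ≤ ∑ i, h (z i)}) := by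
        rw [← mul_assoc, h5, one_mul]
    _ ≤ _ := by
        gcongr
        exact hM.trans h3

lemma aux_bad (μ : Measure ℝ) [IsProbabilityMeasure μ] {a K : ℝ} (ha : 0 < a)
    (hinte : Integrable (fun x => exp (a * |x|)) μ)
    (hK : ∫ x, exp (a * |x|) ∂μ ≤ K) (n : ℕ) (L : ℝ) :
    (Measure.pi fun _ : Fin n => μ).real {z | ∃ i, L ≤ |z i|} ≤ n * (K * exp (-(a * L))) := by
  have h1 : μ.real {x | L ≤ |x|} ≤ K * exp (-(a * L)) := by
    have hM := mul_meas_ge_le_integral_of_nonneg (μ := μ)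
      (f := fun x => exp (a * |x|))
      (Filter.Eventually.of_forall fun z => (exp_pos _).le) hinte (exp (a * L))
    have hset : {x : ℝ | exp (a * L) ≤ exp (a * |x|)} = {x | L ≤ |x|} := by
      ext x
      simp only [mem_ofPred_eq, Real.exp_le_exp, mul_le_mul_iff_right₀ ha]
    rw [hset] at hM
    have h5 : exp (-(a * L)) * exp (a * L) = 1 := by rw [← Real.exp_add]; simp
    calc _ = exp (-(a * L)) * (exp (a * L) * μ.real {x | L ≤ |x|}) := by
          rw [← mul_assoc, h5, one_mul]
      _ ≤ exp (-(a * L)) * K := by gcongr; exact hM.trans hK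
      _ = _ := mul_comm _ _
  have hset : {z : Fin n → ℝ | ∃ i, L ≤ |z i|} = ⋃ i, {z : Fin n → ℝ | L ≤ |z i|} := by
    ext z; simp
  rw [hset]
  refine (measureReal_iUnion_fintype_le _).trans ?_
  calc ∑ i : Fin n, (Measure.pi fun _ : Fin n => μ).real {z : Fin n → ℝ | L ≤ |z i|}
      ≤ ∑ i : Fin n, K * exp (-(a * L)) := by
        refine Finset.sum_le_sum fun i _ => ?_
        have := (measurePreserving_eval (fun _ : Fin n => μ) i).measureReal_preimage
          (s := {x : ℝ | L ≤ |x|}) (by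
            exact (measurableSet_le measurable_const (by fun_prop)).nullMeasurableSet)
        calc _ = μ.real {x : ℝ | L ≤ |x|} := this
          _ ≤ _ := h1
    _ = _ := by simp

set_option maxHeartbeats 1000000 in
/-- The abstract version for measures with an exponential moment. -/
lemma aux_main (a K r : ℝ) (ha : 0 < a) (hK1 : 1 ≤ K) (hr : 1 ≤ r) :
    ∃ C₀ : ℝ, 0 < C₀ ∧ ∀ μ : Measure ℝ, IsProbabilityMeasure μ →
      Integrable (fun x => exp (a * |x|)) μ → ∫ x, exp (a * |x|) ∂μ ≤ K →
      ∀ n : ℕ, 1 ≤ (n : ℝ) → ∀ p : ℝ, 1 ≤ p →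
        (Measure.pi fun _ : Fin n => μ).real
          {z | C₀ * p ^ r ≤ (1 / sqrt n) * |∑ i, (|z i| ^ r - ∫ x, |x| ^ r ∂μ)|} ≤ exp (-p) := by
  have hr0 : 0 < r := by linarith
  set b := a / 2 with hb
  have hb0 : 0 < b := by positivity
  set A := (2 * r / b) ^ (2 * r) with hA
  have hA0 : 0 ≤ A := by positivity
  set c := (1 / a) * (1 + log (3 * K)) with hc
  have hlog : 0 ≤ log (3 * K) := Real.log_nonneg (by linarith)
  have hc0 : 0 < c := by positivity
  set B := c ^ (r - 1) * (2 * r) ^ r with hB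
  have hB0 : 0 < B := by positivity
  set ε := b / B with hε
  have hε0 : 0 < ε := by positivity
  refine ⟨(ε ^ 2 * (A * K) + 3) / ε, by positivity, ?_⟩
  intro μ hμ hinte hK n hn p hp
  set C := (ε ^ 2 * (A * K) + 3) / ε with hC
  have hCε : ε * C = ε ^ 2 * (A * K) + 3 := by rw [hC]; field_simp
  have hp0 : 0 < p := by linarith
  have hsn : 0 < sqrt n := Real.sqrt_pos.2 (by linarith)
  have hsn2 : sqrt n ^ 2 = n := Real.sq_sqrt (by linarith)
  set lam := ε * p ^ (1 - r) / sqrt n with hlam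
  have hq0 : 0 < p ^ (1 - r) := Real.rpow_pos_of_pos hp0 _
  have hq1 : p ^ (1 - r) ≤ 1 := Real.rpow_le_one_of_one_le_of_nonpos hp (by linarith)
  have hlam0 : 0 < lam := by positivity
  have hlogn : 0 ≤ log n := Real.log_nonneg hn
  set L := c * (log n + p) with hL
  have hL0 : 0 < L := by positivity
  -- power bound
  have hpow : ∀ x : ℝ, (|x| ^ r) ^ 2 ≤ A * exp (b * |x|) := by
    intro x
    have := aux_pow_le_exp hb0 (show 0 < 2 * r by linarith) (abs_nonneg x)
    calc (|x| ^ r) ^ 2 = |x| ^ (2 * r) := by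
          rw [← Real.rpow_natCast, ← Real.rpow_mul (abs_nonneg x)]; congr 1; push_cast; ring
      _ ≤ _ := this
  have hexpab : ∀ x : ℝ, exp (b * |x|) * exp (b * |x|) = exp (a * |x|) := by
    intro x; rw [← Real.exp_add]; congr 1; rw [hb]; ring
  have hexp1 : ∀ x : ℝ, 1 ≤ exp (b * |x|) := fun x => Real.one_le_exp (by positivity)
  have hpow' : ∀ x : ℝ, (|x| ^ r) ^ 2 ≤ A * exp (a * |x|) := by
    intro x
    refine (hpow x).trans ?_
    rw [← hexpab x]
    gcongr
    nlinarith [hexp1 x]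
  have hmr : Measurable (fun x : ℝ => |x| ^ r) := by fun_prop
  have hintr : Integrable (fun x => |x| ^ r) μ := by
    refine ((integrable_const 1).add (hinte.const_mul A)).mono' hmr.aestronglyMeasurable
      (Filter.Eventually.of_forall fun x => ?_)
    have h0 : 0 ≤ |x| ^ r := by positivity
    rw [Real.norm_eq_abs, abs_of_nonneg h0]
    have := hpow' x
    simp only [Pi.add_apply]
    nlinarith [sq_nonneg (|x| ^ r - 1)]
  set m := ∫ x, |x| ^ r ∂μ with hm
  -- truncation
  have hlamL : ∀ x : ℝ, |x| ≤ L → lam * |x| ^ r ≤ b * |x| := by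
    intro x hx
    by_cases hx0 : |x| = 0
    · rw [hx0, Real.zero_rpow hr0.ne']; simp
    have hx1 : 0 < |x| := lt_of_le_of_ne (abs_nonneg x) (Ne.symm hx0)
    have e1 : |x| ^ r = |x| ^ (r - 1) * |x| := by
      rw [← Real.rpow_add_one hx0]; congr 1; ring
    rw [e1, ← mul_assoc]
    gcongr
    have e2 : |x| ^ (r - 1) ≤ c ^ (r - 1) * ((1 + log n) ^ (r - 1) * p ^ (r - 1)) := by
      rw [← Real.mul_rpow (by linarith) hp0.le, ← Real.mul_rpow hc0.le (by positivity)]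
      refine Real.rpow_le_rpow hx1.le (hx.trans ?_) (by linarith)
      rw [hL]
      gcongr
      nlinarith
    have e3 := aux_log hr hn
    have e4 : p ^ (1 - r) * p ^ (r - 1) = 1 := by
      rw [← Real.rpow_add hp0]; simp
    calc lam * |x| ^ (r - 1)
        ≤ lam * (c ^ (r - 1) * (((2 * r) ^ r * sqrt n) * p ^ (r - 1))) := by
          refine mul_le_mul_of_nonneg_left (e2.trans ?_) hlam0.le
          gcongr
      _ = ε * B * (p ^ (1 - r) * p ^ (r - 1)) := by
          rw [hlam, hB]; field_simp
      _ = b := by rw [e4, hε]; field_simp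
  -- upper tail
  let g : ℝ → ℝ := fun x => if |x| ≤ L then lam * |x| ^ r else 0
  have hgm : Measurable g := by
    refine Measurable.ite (measurableSet_le (by fun_prop) measurable_const) ?_ measurable_const
    exact hmr.const_mul lam
  have hU := aux_chernoff μ hr hinte hK hintr g hgm lam (lam ^ 2 * A) (by positivity) (by
    intro x
    have h0 : 0 ≤ |x| ^ r := by positivity
    by_cases hx : |x| ≤ L
    · simp only [g, if_pos hx]
      have h1 := aux_exp_upper (mul_nonneg hlam0.le h0)
      have h2 : exp (lam * |x| ^ r) ≤ exp (b * |x|) := Real.exp_le_exp.2 (hlamL x hx)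
      have h3 : (|x| ^ r) ^ 2 * exp (lam * |x| ^ r) ≤ A * exp (a * |x|) := by
        rw [← hexpab x, ← mul_assoc]
        exact mul_le_mul (hpow x) h2 (exp_pos _).le (by positivity)
      have h4 := mul_le_mul_of_nonneg_left h3 (sq_nonneg lam)
      nlinarith
    · simp only [g, if_neg hx, Real.exp_zero]
      have : 0 ≤ lam * |x| ^ r := by positivity
      have : 0 ≤ lam ^ 2 * A * exp (a * |x|) := by positivity
      linarith) n (lam * (n * m + C * p ^ r * sqrt n))
  -- lower tail
  have hD := aux_chernoff μ hr hinte hK hintr (fun x => -(lam * |x| ^ r))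
    ((hmr.const_mul lam).neg) (-lam) (lam ^ 2 * A) (by positivity) (by
    intro x
    have h0 : 0 ≤ |x| ^ r := by positivity
    have h1 := aux_exp_lower (mul_nonneg hlam0.le h0)
    have h4 := mul_le_mul_of_nonneg_left (hpow' x) (sq_nonneg lam)
    nlinarith) n (lam * (C * p ^ r * sqrt n - n * m))
  have hBd := aux_bad μ ha hinte hK n L
  -- numeric
  have hlamC : lam * (C * p ^ r * sqrt n) = (ε ^ 2 * (A * K) + 3) * p := by
    rw [← hCε]
    have e4 : p ^ (1 - r) * p ^ r = p := by
      rw [← Real.rpow_add hp0]; simp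
    calc lam * (C * p ^ r * sqrt n) = ε * C * (p ^ (1 - r) * p ^ r) := by
          rw [hlam]; field_simp
      _ = _ := by rw [e4]
  have hnl : n * (lam ^ 2 * A * K) ≤ ε ^ 2 * (A * K) * p := by
    have : n * (lam ^ 2 * A * K) = ε ^ 2 * (A * K) * (p ^ (1 - r)) ^ 2 := by
      rw [← hsn2, hlam]; field_simp
    rw [this]
    have h1 : (p ^ (1 - r)) ^ 2 ≤ p := (pow_le_one₀ hq0.le hq1).trans hp
    gcongr
  have h3p : exp (-(3 * p)) ≤ exp (-p) / 3 := by
    have h1 : exp (-(3 * p)) = exp (-p) * exp (-(2 * p)) := by rw [← Real.exp_add]; ring_nf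
    have h2 : exp (-(2 * p)) ≤ 1 / 3 := by
      rw [Real.exp_neg, ← one_div]
      apply one_div_le_one_div_of_le (by norm_num)
      have := Real.add_one_le_exp (2 * p)
      linarith
    rw [h1]
    calc _ ≤ exp (-p) * (1 / 3) := by gcongr
      _ = _ := by ring
  have hfin : -((ε ^ 2 * (A * K) + 3) * p) + n * (lam ^ 2 * A * K) ≤ -(3 * p) := by linarith
  have heqU : -(lam * (n * m + C * p ^ r * sqrt n)) + n * (lam * m) + n * (lam ^ 2 * A * K) =
      -((ε ^ 2 * (A * K) + 3) * p) + n * (lam ^ 2 * A * K) := by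
    rw [← hlamC]; ring
  have heqD : -(lam * (C * p ^ r * sqrt n - n * m)) + n * (-lam * m) + n * (lam ^ 2 * A * K) =
      -((ε ^ 2 * (A * K) + 3) * p) + n * (lam ^ 2 * A * K) := by
    rw [← hlamC]; ring
  have hU' := hU.trans ((Real.exp_le_exp.2 (le_of_eq_of_le (heqU) hfin)).trans h3p)
  have hD' := hD.trans ((Real.exp_le_exp.2 (le_of_eq_of_le (heqD) hfin)).trans h3p)
  have hB' : (n : ℝ) * (K * exp (-(a * L))) ≤ exp (-p) / 3 := by
    have e1 : a * L = (1 + log (3 * K)) * (log n + p) := by rw [hL, hc]; field_simp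
    have e2 : log n + p + log (3 * K) ≤ a * L := by rw [e1]; nlinarith
    have e3 : exp (-(a * L)) ≤ exp (-(log n + p + log (3 * K))) := Real.exp_le_exp.2 (by linarith)
    have e4 : exp (-(log n + p + log (3 * K))) = exp (-p) / (n * (3 * K)) := by
      rw [show -(log n + p + log (3 * K)) = -p - (log n + log (3 * K)) by ring, Real.exp_sub,
        Real.exp_add, Real.exp_log (by linarith), Real.exp_log (by linarith)]
    calc (n : ℝ) * (K * exp (-(a * L))) ≤ n * (K * (exp (-p) / (n * (3 * K)))) := by
          rw [← e4]; gcongr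
      _ = _ := by field_simp
  -- union
  have hsub : {z : Fin n → ℝ | C * p ^ r ≤ (1 / sqrt n) * |∑ i, (|z i| ^ r - m)|} ⊆
      {z | lam * (n * m + C * p ^ r * sqrt n) ≤ ∑ i, g (z i)} ∪
      ({z | lam * (C * p ^ r * sqrt n - n * m) ≤ ∑ i, -(lam * |z i| ^ r)} ∪
        {z | ∃ i, L ≤ |z i|}) := by
    intro z hz
    simp only [mem_ofPred_eq] at hz
    have hz' : C * p ^ r * sqrt n ≤ |∑ i, (|z i| ^ r - m)| := by
      have := mul_le_mul_of_nonneg_right hz hsn.le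
      calc _ ≤ _ := this
        _ = _ := by field_simp
    have hsum : ∑ i, (|z i| ^ r - m) = ∑ i, |z i| ^ r - n * m := by
      rw [Finset.sum_sub_distrib]; simp
    rw [hsum] at hz'
    by_cases hbad : ∃ i, L ≤ |z i|
    · exact Or.inr (Or.inr hbad)
    push Not at hbad
    rcases le_abs.1 hz' with h | h
    · left
      simp only [mem_ofPred_eq]
      have : ∑ i, g (z i) = lam * ∑ i, |z i| ^ r := by
        rw [Finset.mul_sum]
        exact Finset.sum_congr rfl fun i _ => if_pos (hbad i).le
      rw [this]
      gcongr
      linarith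
    · right; left
      simp only [mem_ofPred_eq]
      rw [Finset.sum_neg_distrib, ← Finset.mul_sum, ← mul_neg]
      gcongr
      linarith
  calc _ ≤ _ := measureReal_mono hsub
    _ ≤ exp (-p) / 3 + (exp (-p) / 3 + exp (-p) / 3) :=
      (measureReal_union_le _ _).trans
        (add_le_add hU' ((measureReal_union_le _ _).trans (add_le_add hD' (hBd.trans hB'))))
    _ = _ := by ring

/-- for i.i.d. `Z₁,…,Zₙ` with density `f ∈ F_{α,β}` (an upper
semi-continuous log-concave density with envelope `f x ≤ e^{β−α|x|}`), there is a
constant `C₀ = C₀(α,β,r)` such that for all `r ≥ 1`, `t ≥ r^r` and `n ≥ e^r`,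
`P( n^{-1/2} |∑ᵢ (|Zᵢ|^r − E|Zᵢ|^r)| ≥ C₀ t ) ≤ exp(−t^{1/r})`. -/
theorem moment_sum_concentration (α β : ℝ) (hα : 0 < α) (r : ℝ) (hr : 1 ≤ r) :
    ∃ C₀ : ℝ, 0 < C₀ ∧
      ∀ f : ℝ → ℝ, IsDensityFn f → IsLogConcaveFn f → UpperSemicontinuous f →
        (∀ x : ℝ, f x ≤ Real.exp (β - α * |x|)) →
        ∀ n : ℕ, Real.exp r ≤ (n : ℝ) → ∀ t : ℝ, r ^ r ≤ t →
          (Measure.pi fun _ : Fin n => densityMeasure f)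
              {z : Fin n → ℝ |
                C₀ * t ≤ (1 / Real.sqrt n) *
                  |∑ i, (|z i| ^ r - ∫ x : ℝ, |x| ^ r * f x)|}
            ≤ ENNReal.ofReal (Real.exp (-(t ^ (1 / r)))) := by
  have hE : Integrable (fun x : ℝ => exp β * exp (-(α / 2) * |x|)) :=
    (aux_integrable_exp_neg_abs (half_pos hα)).const_mul _
  obtain ⟨C₀, hC₀, H⟩ := aux_main (α / 2)
    (max 1 (∫ x : ℝ, exp β * exp (-(α / 2) * |x|))) r (half_pos hα) (le_max_left _ _) hr
  refine ⟨C₀, hC₀, ?_⟩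
  intro f hf _ _ hle n hn t ht
  obtain ⟨hfm, hf0, hf1⟩ := hf
  have hfi : Integrable f := by
    by_contra h
    rw [integral_undef h] at hf1
    exact zero_ne_one hf1
  have hofm : Measurable fun x => ENNReal.ofReal (f x) := hfm.ennreal_ofReal
  have hlt : ∀ᵐ x : ℝ, ENNReal.ofReal (f x) < ⊤ :=
    Filter.Eventually.of_forall fun x => ENNReal.ofReal_lt_top
  have hprob : IsProbabilityMeasure (densityMeasure f) := by
    refine ⟨?_⟩
    rw [densityMeasure, withDensity_apply _ MeasurableSet.univ, Measure.restrict_univ,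
      ← ofReal_integral_eq_lintegral_ofReal hfi (Filter.Eventually.of_forall hf0), hf1]
    simp
  have hI : ∀ g : ℝ → ℝ, ∫ x, g x ∂(densityMeasure f) = ∫ x, g x * f x := by
    intro g
    rw [densityMeasure, integral_withDensity_eq_integral_toReal_smul hofm hlt]
    refine integral_congr_ae (Filter.Eventually.of_forall fun x => ?_)
    simp only [ENNReal.toReal_ofReal (hf0 x), smul_eq_mul, mul_comm]
  have hbd : ∀ x, exp (α / 2 * |x|) * f x ≤ exp β * exp (-(α / 2) * |x|) := by
    intro x
    calc exp (α / 2 * |x|) * f x ≤ exp (α / 2 * |x|) * exp (β - α * |x|) := by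
          gcongr; exact hle x
      _ = _ := by rw [← Real.exp_add, ← Real.exp_add]; ring_nf
  have hinte' : Integrable (fun x => exp (α / 2 * |x|) * f x) := by
    refine hE.mono' (by fun_prop) (Filter.Eventually.of_forall fun x => ?_)
    rw [Real.norm_eq_abs, abs_of_nonneg (mul_nonneg (exp_pos _).le (hf0 x))]
    exact hbd x
  have hinte : Integrable (fun x => exp (α / 2 * |x|)) (densityMeasure f) := by
    rw [densityMeasure, integrable_withDensity_iff hofm hlt]
    refine hinte'.congr (Filter.Eventually.of_forall fun x => ?_)
    simp only [ENNReal.toReal_ofReal (hf0 x)]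
  have hr0 : 0 < r := by linarith
  have hrr : 0 < r ^ r := Real.rpow_pos_of_pos hr0 r
  have ht0 : 0 < t := by linarith
  have hn1 : 1 ≤ (n : ℝ) := (Real.one_le_exp hr0.le).trans hn
  have hp : 1 ≤ t ^ (1 / r) :=
    Real.one_le_rpow ((Real.one_le_rpow hr hr0.le).trans ht) (by positivity)
  have hpr : (t ^ (1 / r)) ^ r = t := by
    rw [← Real.rpow_mul ht0.le, one_div, inv_mul_cancel₀ hr0.ne', Real.rpow_one]
  have key := H (densityMeasure f) hprob hinte (by
    rw [hI]
    exact (integral_mono hinte' hE hbd).trans (le_max_right _ _)) n hn1 (t ^ (1 / r)) hp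
  rw [hpr, hI] at key
  rw [← ofReal_measureReal]
  exact ENNReal.ofReal_le_ofReal key
end

section
/- Let w be a continuous concave function on [u₀, u₂] and let u₀ < u₁ < u₂. Define the averages A₁ = (1/(u₁−u₀)) ∫_{u₀}^{u₁} w(s) ds and A₂ = (1/(u₂−u₁)) ∫_{u₁}^{u₂} w(s) ds, and the midpoints m₁ = (u₀+u₁)/2, m₂ = (u₁+u₂)/2. Then w′₋(u₂) ≤ (A₂ − A₁)/(m₂ − m₁) ≤ w′₊(u₀), where w′₊ and w′₋ denote the right and left derivatives of w. -/
open MeasureTheory Real Set intervalIntegral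

lemma avg_le_aux (a b c d e : ℝ) (hab : a < b) (w : ℝ → ℝ) (hw : ContinuousOn w (Icc a b))
    (h : ∀ s ∈ Icc a b, w s ≤ c + d * (s - e)) :
    (1 / (b - a)) * (∫ s in a..b, w s) ≤ c + d * ((a + b) / 2 - e) := by
  have h1 : (∫ s in a..b, w s) ≤ ∫ s in a..b, (c + d * (s - e)) := by
    apply intervalIntegral.integral_mono_on hab.le
    · exact hw.intervalIntegrable_of_Icc hab.le
    · exact Continuous.intervalIntegrable (by fun_prop) _ _
    · exact h
  have h2 : ∫ s in a..b, (c + d * (s - e)) = (b - a) * (c + d * ((a + b) / 2 - e)) := by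
    rw [intervalIntegral.integral_add (by simp)
      (Continuous.intervalIntegrable (by fun_prop) _ _), intervalIntegral.integral_const_mul,
      intervalIntegral.integral_sub (by simp) (by simp)]
    simp
    ring
  have hp : 0 < b - a := sub_pos.2 hab
  rw [one_div, inv_mul_le_iff₀ hp]
  linarith

lemma avg_slope_le_aux (u₀ u₁ u₂ d : ℝ) (h01 : u₀ < u₁) (h12 : u₁ < u₂)
    (w : ℝ → ℝ) (hcont : ContinuousOn w (Icc u₀ u₂))
    (h : ∀ u v, u₀ ≤ u → u < v → v ≤ u₂ → w v - w u ≤ d * (v - u)) :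
    ((1 / (u₂ - u₁)) * (∫ s in u₁..u₂, w s) -
            (1 / (u₁ - u₀)) * (∫ s in u₀..u₁, w s)) /
          ((u₁ + u₂) / 2 - (u₀ + u₁) / 2) ≤ d := by
  have A := avg_le_aux u₁ u₂ (w u₁) d u₁ h12 w (hcont.mono (Icc_subset_Icc_left h01.le))
    (fun s hs => by
      rcases hs.1.eq_or_lt with rfl | hlt
      · simp
      · linarith [h u₁ s h01.le hlt hs.2])
  have B := avg_le_aux u₀ u₁ (-w u₁) (-d) u₁ h01 (fun s => -w s)
    (hcont.mono (Icc_subset_Icc_right h12.le)).neg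
    (fun s hs => by
      rcases hs.2.eq_or_lt with rfl | hlt
      · simp
      · linarith [h s u₁ hs.1 hlt h12.le])
  rw [intervalIntegral.integral_neg] at B
  rw [div_le_iff₀ (by linarith)]
  linarith

/-- for a continuous concave function `w` on `[u₀,u₂]` with
one-sided derivatives `d₀ = w′₊(u₀)` (derivative within `[u₀,u₂]` at `u₀`) and
`d₂ = w′₋(u₂)` (derivative within `[u₀,u₂]` at `u₂`), the slope of the chord
between the averages of `w` over `[u₀,u₁]` and `[u₁,u₂]`, placed at the
respective midpoints, lies between `d₂` and `d₀`. -/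
theorem average_slope_between_one_sided_derivs (u₀ u₁ u₂ : ℝ)
    (h01 : u₀ < u₁) (h12 : u₁ < u₂)
    (w : ℝ → ℝ) (hcont : ContinuousOn w (Icc u₀ u₂))
    (hconc : ConcaveOn ℝ (Icc u₀ u₂) w)
    (d₀ d₂ : ℝ)
    (hd₀ : HasDerivWithinAt w d₀ (Icc u₀ u₂) u₀)
    (hd₂ : HasDerivWithinAt w d₂ (Icc u₀ u₂) u₂) :
    d₂ ≤ ((1 / (u₂ - u₁)) * (∫ s in u₁..u₂, w s) -
            (1 / (u₁ - u₀)) * (∫ s in u₀..u₁, w s)) /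
          ((u₁ + u₂) / 2 - (u₀ + u₁) / 2) ∧
    ((1 / (u₂ - u₁)) * (∫ s in u₁..u₂, w s) -
            (1 / (u₁ - u₀)) * (∫ s in u₀..u₁, w s)) /
          ((u₁ + u₂) / 2 - (u₀ + u₁) / 2) ≤ d₀ := by
  have m0 : u₀ ∈ Icc u₀ u₂ := ⟨le_rfl, by linarith⟩
  have m2 : u₂ ∈ Icc u₀ u₂ := ⟨by linarith, le_rfl⟩
  constructor
  · have := avg_slope_le_aux u₀ u₁ u₂ (-d₂) h01 h12 (fun s => -w s) hcont.neg (by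
      intro u v hu huv hv
      have key : d₂ ≤ (w v - w u) / (v - u) := by
        have mu : u ∈ Icc u₀ u₂ := ⟨hu, by linarith⟩
        have mv : v ∈ Icc u₀ u₂ := ⟨by linarith, hv⟩
        rcases hv.eq_or_lt with rfl | hlt
        · simpa [slope_def_field] using hconc.le_slope_of_hasDerivWithinAt mu m2 huv hd₂
        · have h1 := hconc.le_slope_of_hasDerivWithinAt mv m2 hlt hd₂
          rw [slope_def_field] at h1
          exact h1.trans (hconc.slope_anti_adjacent mu m2 huv hlt)
      rw [le_div_iff₀ (by linarith)] at key
      linarith)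
    simp only [intervalIntegral.integral_neg] at this
    rw [div_le_iff₀ (by linarith)] at this
    rw [le_div_iff₀ (by linarith)]
    linarith
  · apply avg_slope_le_aux u₀ u₁ u₂ d₀ h01 h12 w hcont
    intro u v hu huv hv
    have key : (w v - w u) / (v - u) ≤ d₀ := by
      have mu : u ∈ Icc u₀ u₂ := ⟨hu, by linarith⟩
      have mv : v ∈ Icc u₀ u₂ := ⟨by linarith, hv⟩
      rcases hu.eq_or_lt with rfl | hlt
      · simpa [slope_def_field] using hconc.slope_le_of_hasDerivWithinAt m0 mv huv hd₀
      · have h1 := hconc.slope_le_of_hasDerivWithinAt m0 mu hlt hd₀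
        rw [slope_def_field] at h1
        exact (hconc.slope_anti_adjacent m0 mv hlt huv).trans h1
    rw [div_le_iff₀ (by linarith)] at key
    linarith
end
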